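/- Fix η with 0 < η < 1/20. For every sufficiently large prime p, there exist primes p₁, p₂, p₃, p₄ with p^{1/8 + η} < p₁, p₂, p₃, p₄ ≤ 2·p^{1/8 + η} such that p₁·p₂ + p₃·p₄ is a quadratic non-residue modulo p. -/

import Mathlib

/-- An integer `x` is a quadratic non-residue modulo the prime `p`. -/
def IsQuadNonRes (p : ℕ) (x : ℤ) : Prop :=
  ¬ ((p : ℤ) ∣ x) ∧ ¬ ∃ y : ℤ, y ^ 2 ≡ x [ZMOD (p : ℤ)]

section Stepanov
open Polynomial

noncomputable def stOp {K : Type*} [Field K] (f : K[X]) (n : ℕ) : K[X] →ₗ[K] K[X] :=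
  (n : K) • LinearMap.mulLeft K (derivative f) + LinearMap.mulLeft K f ∘ₗ derivative

noncomputable def stIter {K : Type*} [Field K] (f : K[X]) (n : ℕ) : ℕ → (K[X] →ₗ[K] K[X])
  | 0 => LinearMap.id
  | k + 1 => stOp f (n - k) ∘ₗ stIter f n k

lemma stOp_apply {K : Type*} [Field K] (f : K[X]) (n : ℕ) (u : K[X]) :
    stOp f n u = (n : K[X]) * derivative f * u + f * derivative u := by
  simp [stOp, Polynomial.smul_eq_C_mul, mul_assoc]

lemma stIter_deriv {K : Type*} [Field K] (f : K[X]) (n k : ℕ) (hk : k ≤ n) (u Y : K[X])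
    (hY : derivative Y = 0) :
    derivative^[k] (f ^ n * u * Y) = f ^ (n - k) * stIter f n k u * Y := by
  induction k with
  | zero => simp [stIter]
  | succ k ih =>
    rw [Function.iterate_succ_apply', ih (by omega)]
    obtain ⟨e, he⟩ : ∃ e, n - k = e + 1 := ⟨n - k - 1, by omega⟩
    have h2 : n - (k + 1) = e := by omega
    simp only [stIter, LinearMap.comp_apply, stOp_apply, he, h2]
    simp only [derivative_mul, derivative_pow, hY]
    simp only [add_tsub_cancel_right, map_natCast, map_add, map_one, Nat.cast_add, Nat.cast_one, mul_zero, add_zero]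
    ring

lemma stOp_degreeLT {K : Type*} [Field K] (f : K[X]) (m : ℕ) (hf : f.natDegree ≤ m) (n e : ℕ)
    (u : K[X]) (hu : u ∈ degreeLT K e) : stOp f n u ∈ degreeLT K (e + m) := by
  rw [mem_degreeLT] at hu ⊢
  rw [stOp_apply]
  by_cases h0 : u = 0
  · subst h0; simp
  have hu' : u.natDegree < e := (natDegree_lt_iff_degree_lt h0).2 hu
  refine lt_of_le_of_lt degree_le_natDegree ?_
  have h1 := natDegree_add_le ((n : K[X]) * derivative f * u) (f * derivative u)
  have h2 := natDegree_mul_le (p := (n : K[X]) * derivative f) (q := u)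
  have h3 := natDegree_mul_le (p := (n : K[X])) (q := derivative f)
  have h4 := natDegree_mul_le (p := f) (q := derivative u)
  have h5 := natDegree_derivative_le f
  have h6 := natDegree_derivative_le u
  have h7 : ((n : K[X])).natDegree = 0 := natDegree_natCast n
  have : ((n : K[X]) * derivative f * u + f * derivative u).natDegree < e + m := by
    refine lt_of_le_of_lt h1 (max_lt ?_ ?_) <;> omega
  exact_mod_cast this

lemma stIter_degreeLT {K : Type*} [Field K] (f : K[X]) (m : ℕ) (hf : f.natDegree ≤ m) (n e k : ℕ)
    (u : K[X]) (hu : u ∈ degreeLT K e) : stIter f n k u ∈ degreeLT K (e + k * m) := by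
  induction k with
  | zero => simpa [stIter] using hu
  | succ k ih =>
    have := stOp_degreeLT f m hf (n - k) _ _ ih
    simpa [stIter, add_mul, add_assoc] using this

lemma stepanov_exists {K : Type*} [Field K] (f : K[X]) (m : ℕ) (hf : f.natDegree ≤ m)
    (l J d c : ℕ) (a : K) (h : l * (d + l * m + J) < J * (2 * d)) :
    ∃ r s : ℕ → K[X], (∀ j, r j ∈ degreeLT K d) ∧ (∀ j, s j ∈ degreeLT K d) ∧
      (∃ j < J, r j ≠ 0 ∨ s j ≠ 0) ∧
      ∀ k < l, ∑ j ∈ Finset.range J,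
        (stIter f l k (r j) + C a * stIter f (l + c) k (s j)) * X ^ j = 0 := by
  classical
  let V := Fin J → (degreeLT K d × degreeLT K d)
  let σ : ℕ → (V →ₗ[K] K[X]) := fun k => ∑ j : Fin J,
    LinearMap.mulRight K (X ^ (j : ℕ)) ∘ₗ
      ((stIter f l k) ∘ₗ (degreeLT K d).subtype ∘ₗ LinearMap.fst K _ _ ∘ₗ LinearMap.proj j
       + a • ((stIter f (l + c) k) ∘ₗ (degreeLT K d).subtype ∘ₗ LinearMap.snd K _ _ ∘ₗ
          LinearMap.proj j))
  have hσ : ∀ k v, σ k v = ∑ j : Fin J, (stIter f l k (v j).1 + C a * stIter f (l + c) k (v j).2)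
      * X ^ (j : ℕ) := by
    intro k v
    simp [σ, Polynomial.smul_eq_C_mul]
    rfl
  let Φ : V →ₗ[K] (Fin l → Fin (d + l * m + J) → K) :=
    LinearMap.pi fun k => LinearMap.pi fun i => Polynomial.lcoeff K (i : ℕ) ∘ₗ σ k
  have hfin : Module.finrank K (degreeLT K d) = d := by
    rw [(degreeLTEquiv K d).finrank_eq]; simp
  have : FiniteDimensional K (degreeLT K d) := Module.Finite.equiv (degreeLTEquiv K d).symm
  have hker : LinearMap.ker Φ ≠ ⊥ := by
    apply LinearMap.ker_ne_bot_of_finrank_lt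
    simp only [V, Module.finrank_pi_fintype, Module.finrank_prod, hfin]
    simp
    linarith
  obtain ⟨v, hv, hv0⟩ := Submodule.exists_mem_ne_zero_of_ne_bot hker
  refine ⟨fun j => if h : j < J then ((v ⟨j, h⟩).1 : K[X]) else 0,
    fun j => if h : j < J then ((v ⟨j, h⟩).2 : K[X]) else 0, ?_, ?_, ?_, ?_⟩
  · intro j; dsimp only; split_ifs with h
    · exact (v ⟨j, h⟩).1.2
    · exact zero_mem _
  · intro j; dsimp only; split_ifs with h
    · exact (v ⟨j, h⟩).2.2
    · exact zero_mem _
  · by_contra! hcon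
    apply hv0
    funext j
    have := hcon j j.2
    simp only [j.2, dif_pos] at this
    exact Prod.ext (Subtype.ext this.1) (Subtype.ext this.2)
  · intro k hk
    have h1 : σ k v ∈ degreeLT K (d + l * m + J) := by
      rw [hσ]
      apply Submodule.sum_mem
      intro j _
      have hmono : degreeLT K (d + k * m) ≤ degreeLT K (d + l * m) :=
        degreeLT_mono (by gcongr)
      have h1 := hmono (stIter_degreeLT f m hf l d k _ (v j).1.2)
      have h2 := hmono (stIter_degreeLT f m hf (l + c) d k _ (v j).2.2)
      have h3 : stIter f l k (v j).1 + C a * stIter f (l + c) k (v j).2 ∈ degreeLT K (d + l * m) := by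
        rw [← Polynomial.smul_eq_C_mul]
        exact add_mem h1 (Submodule.smul_mem _ _ h2)
      rw [mem_degreeLT] at h3 ⊢
      rw [degree_mul, degree_X_pow]
      have hj := j.2
      calc _ < ((d + l * m : ℕ) : WithBot ℕ) + ((j : ℕ) : WithBot ℕ) := by
            exact WithBot.add_lt_add_right (WithBot.coe_ne_bot) h3
        _ ≤ _ := by exact_mod_cast (by omega)
    have h2 : σ k v = 0 := by
      ext i
      by_cases hi : i < d + l * m + J
      · have := congrFun (congrFun (LinearMap.mem_ker.1 hv) ⟨k, hk⟩) ⟨i, hi⟩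
        simpa [Φ] using this
      · rw [coeff_zero]
        apply coeff_eq_zero_of_degree_lt
        rw [mem_degreeLT] at h1
        exact lt_of_lt_of_le h1 (by exact_mod_cast (not_lt.1 hi))
    rw [hσ] at h2
    refine Eq.trans ?_ h2
    rw [Finset.sum_range]
    simp

noncomputable def linProd {p : ℕ} (S : Finset (ZMod p)) : (ZMod p)[X] := ∏ b ∈ S, (X + C b)

lemma linProd_natDegree {p : ℕ} [Fact p.Prime] (S : Finset (ZMod p)) :
    (linProd S).natDegree = S.card := by
  unfold linProd
  rw [natDegree_prod_of_monic _ _ (fun b _ => monic_X_add_C b)]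
  simp

lemma linProd_ne_zero {p : ℕ} [Fact p.Prime] (S : Finset (ZMod p)) : linProd S ≠ 0 :=
  Finset.prod_ne_zero_iff.2 fun b _ => X_add_C_ne_zero b

lemma linProd_eval {p : ℕ} (S : Finset (ZMod p)) (x : ZMod p) :
    (linProd S).eval x = ∏ b ∈ S, (x + b) := by
  simp [linProd, eval_prod]

/-- no solution of `r² f = k s²` -/
lemma sq_mul_linProd {p : ℕ} [Fact p.Prime] (S : Finset (ZMod p)) (hS : S.Nonempty)
    (r s : (ZMod p)[X]) (k : ZMod p) (hk : k ≠ 0) (h : r ^ 2 * linProd S = C k * s ^ 2) :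
    r = 0 ∧ s = 0 := by
  classical
  obtain ⟨b, hb⟩ := hS
  have hf := linProd_ne_zero S
  have hCk : C k ≠ 0 := by simpa using hk
  by_cases hr : r = 0
  · subst hr
    simp [hk] at h
    exact ⟨rfl, h⟩
  exfalso
  have hs : s ≠ 0 := by
    rintro rfl
    simp at h
    tauto
  have h1 := congrArg (rootMultiplicity (-b)) h
  rw [rootMultiplicity_mul (mul_ne_zero (pow_ne_zero _ hr) hf),
    rootMultiplicity_mul (mul_ne_zero hCk (pow_ne_zero _ hs)), rootMultiplicity_C] at h1
  have h2 : rootMultiplicity (-b) (linProd S) = 1 := by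
    unfold linProd
    rw [← Finset.mul_prod_erase _ _ hb, rootMultiplicity_mul]
    · have : rootMultiplicity (-b) (X + C b) = 1 := by
        have := rootMultiplicity_X_sub_C_self (x := -b)
        simpa using this
      rw [this, rootMultiplicity_eq_zero]
      simp only [IsRoot, eval_prod, Finset.prod_eq_zero_iff]
      rintro ⟨a, ha, h⟩
      simp at h
      exact (Finset.mem_erase.1 ha).1 (by linear_combination h)
    · rw [Finset.mul_prod_erase S (fun b => X + C b) hb]; exact hf
  have h3 : ∀ u : (ZMod p)[X], u ≠ 0 → rootMultiplicity (-b) (u ^ 2) = 2 * rootMultiplicity (-b) u := by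
    intro u hu
    rw [sq, rootMultiplicity_mul (mul_ne_zero hu hu)]; ring
  rw [h2, h3 _ hr, h3 _ hs] at h1
  omega

lemma stepanov_first {p : ℕ} [Fact p.Prime] (S : Finset (ZMod p)) (hS : S.Nonempty)
    (h0 : (0 : ZMod p) ∉ S) (c d : ℕ) (hc : 2 * c + 1 = p) (hd : 2 * d + S.card ≤ p)
    (r s R T : (ZMod p)[X]) (hr : r ∈ degreeLT (ZMod p) d) (hs : s ∈ degreeLT (ZMod p) d)
    (h : (r + X ^ p * R) + (s + X ^ p * T) * linProd S ^ c = 0) : r = 0 ∧ s = 0 := by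
  set f := linProd S with hf
  have hk : f.eval 0 ≠ 0 := by
    rw [hf, linProd_eval, Finset.prod_ne_zero_iff]
    intro b hb
    rw [zero_add]; rintro rfl; exact h0 hb
  apply sq_mul_linProd S hS r s (f.eval 0) hk
  have h1 : (r + X ^ p * R) ^ 2 * f = (s + X ^ p * T) ^ 2 * f ^ p := by
    have : r + X ^ p * R = - ((s + X ^ p * T) * f ^ c) := by
      linear_combination h
    have e : f ^ p = (f ^ c) ^ 2 * f := by
      calc f ^ p = f ^ (2 * c + 1) := congrArg (f ^ ·) hc.symm
        _ = _ := by ring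
    rw [this, e]; ring
  have h2 : X ^ p ∣ f ^ p - C (f.eval 0) := by
    have e1 : C (f.eval 0) = C (f.eval 0) ^ p := by
      rw [← C_pow, ZMod.pow_card]
    rw [e1, ← sub_pow_expChar (p := p)]
    apply pow_dvd_pow_of_dvd
    rw [X_dvd_iff]
    simp [coeff_zero_eq_eval_zero]
  obtain ⟨Q, hQ⟩ := h2
  have h3 : X ^ p ∣ r ^ 2 * f - C (f.eval 0) * s ^ 2 := by
    have e : f ^ p = C (f.eval 0) + X ^ p * Q := by linear_combination hQ
    rw [e] at h1
    refine ⟨s ^ 2 * Q + (2 * s * T + X ^ p * T ^ 2) * (C (f.eval 0) + X ^ p * Q)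
      - (2 * r * R + X ^ p * R ^ 2) * f, ?_⟩
    linear_combination h1
  have key : ∀ u : (ZMod p)[X], u ∈ degreeLT (ZMod p) d → u = 0 ∨ u.natDegree < d := by
    intro u hu
    by_cases h : u = 0
    · exact Or.inl h
    · exact Or.inr ((natDegree_lt_iff_degree_lt h).2 (mem_degreeLT.1 hu))
  have hfd : f.natDegree = S.card := linProd_natDegree S
  have hcard : 0 < S.card := hS.card_pos
  have h4 : (r ^ 2 * f - C (f.eval 0) * s ^ 2).natDegree < p := by
    refine lt_of_le_of_lt (natDegree_sub_le _ _) (max_lt ?_ ?_)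
    · rcases key r hr with h | h
      · subst h; simp; omega
      · have a1 := natDegree_mul_le (p := r ^ 2) (q := f)
        have a2 := natDegree_pow_le (p := r) (n := 2)
        omega
    · rcases key s hs with h | h
      · subst h; simp; omega
      · have a1 := natDegree_mul_le (p := C (f.eval 0)) (q := s ^ 2)
        have a2 := natDegree_pow_le (p := s) (n := 2)
        have a3 := natDegree_C (f.eval 0)
        omega
  have h5 := eq_zero_of_dvd_of_natDegree_lt h3 (by simpa using h4)
  linear_combination h5

lemma stepanov_ne {p : ℕ} [Fact p.Prime] (S : Finset (ZMod p)) (hS : S.Nonempty)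
    (h0 : (0 : ZMod p) ∉ S) (c d : ℕ) (hc : 2 * c + 1 = p) (hd : 2 * d + S.card ≤ p) (J : ℕ) :
    ∀ (r s : ℕ → (ZMod p)[X]) (_ : ∀ j, r j ∈ degreeLT (ZMod p) d)
    (_ : ∀ j, s j ∈ degreeLT (ZMod p) d)
    (_ : ∑ j ∈ Finset.range J, (r j + s j * linProd S ^ c) * (X ^ p) ^ j = 0),
    ∀ j < J, r j = 0 ∧ s j = 0 := by
  induction J with
  | zero => intro r s _ _ _ j hj; omega
  | succ J ih =>
    intro r s hr hs h j hj
    have e : ∑ j ∈ Finset.range (J + 1), (r j + s j * linProd S ^ c) * (X ^ p) ^ j =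
        X ^ p * (∑ j ∈ Finset.range J, (r (j+1) + s (j+1) * linProd S ^ c) * (X ^ p) ^ j)
        + (r 0 + s 0 * linProd S ^ c) := by
      rw [Finset.sum_range_succ', Finset.mul_sum]
      congr 1
      · apply Finset.sum_congr rfl; intro i _; ring
      · ring
    rw [e] at h
    have h1 : r 0 = 0 ∧ s 0 = 0 := by
      apply stepanov_first S hS h0 c d hc hd (r 0) (s 0)
        (∑ j ∈ Finset.range J, r (j+1) * (X ^ p) ^ j)
        (∑ j ∈ Finset.range J, s (j+1) * (X ^ p) ^ j) (hr 0) (hs 0)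
      rw [← h]
      have : ∑ j ∈ Finset.range J, (r (j+1) + s (j+1) * linProd S ^ c) * (X ^ p) ^ j =
        ∑ j ∈ Finset.range J, r (j+1) * (X ^ p) ^ j +
        (∑ j ∈ Finset.range J, s (j+1) * (X ^ p) ^ j) * linProd S ^ c := by
        rw [Finset.sum_mul, ← Finset.sum_add_distrib]
        apply Finset.sum_congr rfl; intro i _; ring
      rw [this]; ring
    rcases j with _ | j
    · exact h1
    · rw [h1.1, h1.2] at h
      simp only [zero_mul, add_zero] at h
      have h2 := (mul_eq_zero.1 h).resolve_left (pow_ne_zero _ X_ne_zero)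
      exact ih (fun j => r (j+1)) (fun j => s (j+1)) (fun j => hr _) (fun j => hs _) h2 j (by omega)

lemma stepanov_bound {p : ℕ} [Fact p.Prime] (S : Finset (ZMod p)) (hS : S.Nonempty)
    (h0 : (0 : ZMod p) ∉ S) (c d l J : ℕ) (hc : 2 * c + 1 = p) (hd : 2 * d + S.card ≤ p)
    (hl0 : 0 < l) (hl : l ≤ p)
    (h : l * (d + l * S.card + J) < J * (2 * d)) (a : ZMod p) (ha : a ≠ 0) :
    l * (Finset.univ.filter (fun x : ZMod p => (∏ b ∈ S, (x + b)) ^ c = a)).card ≤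
      l * S.card + (d + S.card * c + p * J) := by
  classical
  set m := S.card with hm
  set f := linProd S with hf
  have hfd : f.natDegree = m := linProd_natDegree S
  obtain ⟨r, s, hr, hs, ⟨j0, hj0, hne⟩, hσ⟩ := stepanov_exists f m hfd.le l J d c a h
  set G := ∑ j ∈ Finset.range J, (r j + s j * f ^ c) * (X ^ p) ^ j with hG
  have hG0 : G ≠ 0 := by
    intro hG0
    have := stepanov_ne S hS h0 c d hc hd J r s hr hs hG0 j0 hj0
    tauto
  set P := f ^ l * G with hP
  have hP0 : P ≠ 0 := mul_ne_zero (pow_ne_zero _ (linProd_ne_zero S)) hG0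
  have hY : ∀ j : ℕ, derivative ((X ^ p) ^ j : (ZMod p)[X]) = 0 := by
    intro j
    rw [← pow_mul, derivative_X_pow]
    simp
  have hder : ∀ k ≤ l, derivative^[k] P = ∑ j ∈ Finset.range J,
      (f ^ (l - k) * stIter f l k (r j) * (X ^ p) ^ j +
       f ^ (l + c - k) * stIter f (l + c) k (s j) * (X ^ p) ^ j) := by
    intro k hk
    rw [hP, hG, Finset.mul_sum, iterate_derivative_sum]
    apply Finset.sum_congr rfl
    intro j _
    rw [← stIter_deriv f l k hk _ _ (hY j), ← stIter_deriv f (l + c) k (by omega) _ _ (hY j),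
      ← iterate_map_add]
    congr 1
    ring
  have hroot : ∀ x ∈ Finset.univ.filter (fun x : ZMod p => (∏ b ∈ S, (x + b)) ^ c = a),
      l ≤ rootMultiplicity x P := by
    intro x hx
    have hx : (f.eval x) ^ c = a := by
      rw [hf, linProd_eval]; exact (Finset.mem_filter.1 hx).2
    have : l - 1 < rootMultiplicity x P := by
      rw [lt_rootMultiplicity_iff_isRoot_iterate_derivative_of_mem_nonZeroDivisors hP0]
      · intro k hk
        have hkl : k < l := by omega
        rw [hder k hkl.le, IsRoot, eval_finsetSum]
        have h1 := congrArg (fun q => f.eval x ^ (l - k) * eval x q) (hσ k hkl)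
        simp only [eval_finsetSum, eval_zero, mul_zero, Finset.mul_sum] at h1
        rw [← h1]
        apply Finset.sum_congr rfl
        intro j _
        have e : l + c - k = (l - k) + c := by omega
        simp only [eval_add, eval_mul, eval_pow, eval_X, ZMod.pow_card, eval_C, e, pow_add, hx]
        ring
      · rw [mem_nonZeroDivisors_iff_ne_zero]
        rw [Ne, ZMod.natCast_eq_zero_iff, (Fact.out : p.Prime).dvd_factorial]
        omega
    omega
  have h1 : l * (Finset.univ.filter (fun x : ZMod p => (∏ b ∈ S, (x + b)) ^ c = a)).card
      ≤ P.natDegree := by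
    refine le_trans ?_ (card_roots' P)
    calc _ = ∑ x ∈ Finset.univ.filter (fun x : ZMod p => (∏ b ∈ S, (x + b)) ^ c = a), l := by
          rw [Finset.sum_const, smul_eq_mul, mul_comm]
      _ ≤ ∑ x ∈ Finset.univ.filter (fun x : ZMod p => (∏ b ∈ S, (x + b)) ^ c = a),
          P.roots.count x := by
          apply Finset.sum_le_sum
          intro x hx
          rw [count_roots]; exact hroot x hx
      _ ≤ ∑ x, P.roots.count x := Finset.sum_le_sum_of_subset (Finset.filter_subset _ _)
      _ = _ := by
          rw [Multiset.sum_count_eq_card]; simp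
  refine h1.trans ?_
  have key : ∀ u : (ZMod p)[X], u ∈ degreeLT (ZMod p) d → u.natDegree ≤ d := by
    intro u hu
    by_cases h : u = 0
    · simp [h]
    · exact ((natDegree_lt_iff_degree_lt h).2 (mem_degreeLT.1 hu)).le
  have h2 : (f ^ l).natDegree ≤ l * m := by
    have := natDegree_pow_le (p := f) (n := l); rwa [hfd] at this
  have h3 : (f ^ c).natDegree ≤ m * c := by
    have := natDegree_pow_le (p := f) (n := c); rw [hfd] at this; linarith
  have h4 : G.natDegree ≤ d + m * c + p * J := by
    apply natDegree_sum_le_of_forall_le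
    intro j hj
    have hj := Finset.mem_range.1 hj
    refine (natDegree_mul_le).trans ?_
    have a1 : (r j + s j * f ^ c).natDegree ≤ d + m * c := by
      refine (natDegree_add_le _ _).trans (max_le ?_ ?_)
      · have := key _ (hr j); omega
      · have := key _ (hs j)
        have := natDegree_mul_le (p := s j) (q := f ^ c)
        omega
    have a2 : ((X ^ p : (ZMod p)[X]) ^ j).natDegree ≤ p * J := by
      rw [← pow_mul, natDegree_X_pow]
      gcongr
    omega
  have := natDegree_mul_le (p := f ^ l) (q := G)
  rw [← hP] at this
  omega

lemma stepanov_count {p : ℕ} [Fact p.Prime] (S : Finset (ZMod p)) (hS : S.Nonempty)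
    (h0 : (0 : ZMod p) ∉ S) (c : ℕ) (hc : 2 * c + 1 = p)
    (hp : 4 * ((S.card : ℝ) + 1) ≤ √p) (a : ZMod p) (ha : a ≠ 0) :
    ((Finset.univ.filter (fun x : ZMod p => (∏ b ∈ S, (x + b)) ^ c = a)).card : ℝ) ≤
      p / 2 + S.card + 2 * (3 * S.card + 2) * √p := by
  set m := S.card with hm
  have hm1 : 1 ≤ m := hS.card_pos
  have hm1' : (1 : ℝ) ≤ m := by exact_mod_cast hm1
  set q := √(p : ℝ) with hq
  have hqq : q * q = p := Real.mul_self_sqrt (by positivity)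
  have hq4 : 8 ≤ q := by linarith
  set t := ⌊q / 2⌋₊ with ht
  have ht1 : (t : ℝ) ≤ q / 2 := Nat.floor_le (by linarith)
  have ht2 : q / 2 < t + 1 := Nat.lt_floor_add_one _
  have hpm : m ≤ p := by
    have : (m : ℝ) ≤ p := by nlinarith
    exact_mod_cast this
  set d := (p - m) / 2 with hd
  have hd1 : 2 * d + m ≤ p := by omega
  have hd2 : p ≤ 2 * d + m + 1 := by omega
  have hd1' : 2 * (d : ℝ) + m ≤ p := by exact_mod_cast hd1
  have hd2' : (p : ℝ) ≤ 2 * d + m + 1 := by exact_mod_cast hd2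
  have htd : (t : ℝ) * t + t < d := by nlinarith
  have htd' : t * t + t < d := by exact_mod_cast htd
  have ht0 : 0 < t := by
    have : (0 : ℝ) < t := by linarith
    exact_mod_cast this
  have hcond : (2 * t) * (d + (2 * t) * m + (t + 2 * m + 1)) < (t + 2 * m + 1) * (2 * d) := by
    have := Nat.mul_lt_mul_of_pos_left htd' (show 0 < 2 * (2 * m + 1) by omega)
    nlinarith
  have hlp : 2 * t ≤ p := by
    have : (2 * t : ℝ) ≤ p := by nlinarith
    exact_mod_cast this
  have := stepanov_bound S hS h0 c d (2 * t) (t + 2 * m + 1) hc hd1 (by omega) hlp hcond a ha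
  set n := (Finset.univ.filter (fun x : ZMod p => (∏ b ∈ S, (x + b)) ^ c = a)).card with hn
  have h1 : (2 * t : ℝ) * n ≤ (2 * t) * m + (d + m * c + p * (t + 2 * m + 1)) := by
    exact_mod_cast this
  have hc' : 2 * (c : ℝ) + 1 = p := by exact_mod_cast hc
  have htq : q / 4 ≤ t := by linarith
  have hp0 : (0 : ℝ) < p := by rw [← hqq]; positivity
  have h2 : (2 * t : ℝ) * n ≤ (2 * t) * m + p * t + p * (3 * m + 2) := by
    nlinarith
  have h3 : (p : ℝ) * (3 * m + 2) ≤ (2 * t) * (2 * (3 * m + 2) * q) := by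
    rw [← hqq]
    have : q * q ≤ 2 * t * 2 * q := by nlinarith
    nlinarith
  have ht0' : (0 : ℝ) < 2 * t := by positivity
  have h4 : (2 * t : ℝ) * n ≤ (2 * t) * (p / 2 + m + 2 * (3 * m + 2) * q) := by
    linarith
  exact le_of_mul_le_mul_left h4 ht0'

/-- The Weil bound for products of distinct linear factors (quadratic character). -/
lemma weil_linProd {p : ℕ} [Fact p.Prime] (hp2 : p ≠ 2) (S : Finset (ZMod p)) (hS : S.Nonempty)
    (h0 : (0 : ZMod p) ∉ S) :
    |((∑ x : ZMod p, quadraticChar (ZMod p) (∏ b ∈ S, (x + b)) : ℤ) : ℝ)| ≤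
      (15 * S.card + 8) * √p := by
  classical
  have hm1 : 1 ≤ S.card := hS.card_pos
  have hm1' : (1 : ℝ) ≤ S.card := by exact_mod_cast hm1
  set q := √(p : ℝ) with hq
  have hqq : q * q = p := Real.mul_self_sqrt (by positivity)
  have hq0 : 0 ≤ q := Real.sqrt_nonneg _
  by_cases hbig : 4 * ((S.card : ℝ) + 1) ≤ q
  swap
  · have h1 : |((∑ x : ZMod p, quadraticChar (ZMod p) (∏ b ∈ S, (x + b)) : ℤ) : ℝ)| ≤ p := by
      push_cast
      refine (Finset.abs_sum_le_sum_abs _ _).trans ?_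
      calc _ ≤ ∑ x : ZMod p, (1 : ℝ) := by
            apply Finset.sum_le_sum
            intro x _
            by_cases h : (∏ b ∈ S, (x + b)) = 0
            · rw [h]; simp
            · rcases quadraticChar_dichotomy h with h | h <;> rw [h] <;> simp
        _ = p := by simp [ZMod.card]
    nlinarith
  obtain ⟨c, hc⟩ : ∃ c, 2 * c + 1 = p := by
    have := (Fact.out : p.Prime).eq_two_or_odd'
    rcases this with h | ⟨k, hk⟩
    · exact absurd h hp2
    · exact ⟨k, hk.symm⟩
  have hring : ringChar (ZMod p) ≠ 2 := by rwa [ZMod.ringChar_zmod_n]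
  have hc2 : Fintype.card (ZMod p) / 2 = c := by rw [ZMod.card]; omega
  have hone : (1 : ZMod p) ≠ -1 := by
    intro h
    exact Ring.neg_one_ne_one_of_char_ne_two hring h.symm
  set A := Finset.univ.filter (fun x : ZMod p => (∏ b ∈ S, (x + b)) ^ c = 1) with hA
  set B := Finset.univ.filter (fun x : ZMod p => (∏ b ∈ S, (x + b)) ^ c = -1) with hB
  set Z := Finset.univ.filter (fun x : ZMod p => (∏ b ∈ S, (x + b)) = 0) with hZ
  have hsum : (∑ x : ZMod p, quadraticChar (ZMod p) (∏ b ∈ S, (x + b)) : ℤ) = A.card - B.card := by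
    have e : ∀ x : ZMod p, quadraticChar (ZMod p) (∏ b ∈ S, (x + b)) =
        (if (∏ b ∈ S, (x + b)) ^ c = 1 then 1 else 0) -
        (if (∏ b ∈ S, (x + b)) ^ c = -1 then 1 else 0) := by
      intro x
      have hc0 : c ≠ 0 := by
        rintro rfl
        have := (Fact.out : p.Prime).one_lt
        omega
      by_cases h : (∏ b ∈ S, (x + b)) = 0
      · rw [h]; simp [hc0]
      · have := quadraticChar_eq_pow_of_char_ne_two hring h
        rw [hc2] at this
        have h3 := quadraticChar_eq_pow_of_char_ne_two' hring (∏ b ∈ S, (x + b))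
        rw [hc2] at h3
        rcases quadraticChar_dichotomy h with h2 | h2
        · rw [h2] at h3 ⊢
          rw [← h3]; simp [hone]
        · rw [h2] at h3 ⊢
          rw [← h3]; simp [hone.symm]
    simp_rw [e]
    rw [Finset.sum_sub_distrib, hA, hB]
    simp
  have hcover : p ≤ A.card + B.card + Z.card := by
    have : (Finset.univ : Finset (ZMod p)) ⊆ A ∪ B ∪ Z := by
      intro x _
      simp only [Finset.mem_union, hA, hB, hZ, Finset.mem_filter, Finset.mem_univ, true_and]
      by_cases h : (∏ b ∈ S, (x + b)) = 0
      · exact Or.inr h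
      · left
        have h3 := quadraticChar_eq_pow_of_char_ne_two' hring (∏ b ∈ S, (x + b))
        rw [hc2] at h3
        rcases quadraticChar_dichotomy h with h2 | h2
        · left; rw [← h3, h2]; simp
        · right; rw [← h3, h2]; simp
    have h2 := Finset.card_le_card this
    rw [Finset.card_univ, ZMod.card] at h2
    have h3 := Finset.card_union_le (A ∪ B) Z
    have h4 := Finset.card_union_le A B
    omega
  have hZc : Z.card ≤ S.card := by
    have : Z ⊆ S.image (fun b => -b) := by
      intro x hx
      have hx := (Finset.mem_filter.1 hx).2
      obtain ⟨b, hb, h⟩ := Finset.prod_eq_zero_iff.1 hx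
      exact Finset.mem_image.2 ⟨b, hb, by linear_combination -h⟩
    exact (Finset.card_le_card this).trans Finset.card_image_le
  have hA1 := stepanov_count S hS h0 c hc hbig 1 one_ne_zero
  have hB1 := stepanov_count S hS h0 c hc hbig (-1) (by simp)
  rw [← hA] at hA1
  rw [← hB] at hB1
  rw [hsum]
  have hcover' : (p : ℝ) ≤ A.card + B.card + S.card := by
    have : p ≤ A.card + B.card + S.card := by omega
    exact_mod_cast this
  push_cast
  rw [abs_le]
  have hq1 : (1 : ℝ) ≤ q := by linarith
  have : (S.card : ℝ) ≤ S.card * q := by nlinarith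
  constructor <;> nlinarith

end Stepanov

def dyPrimes (n : ℕ) : Finset ℕ := (Finset.Ioc n (2 * n)).filter Nat.Prime

lemma centralBinom_le_dyPrimes (n : ℕ) (n_large : 2 < n) :
    Nat.centralBinom n ≤ (2 * n) ^ (Nat.sqrt (2 * n)) * 4 ^ (2 * n / 3) *
      (2 * n) ^ (dyPrimes n).card := by
  have n_pos : 0 < n := (Nat.zero_le _).trans_lt n_large
  have n2_pos : 1 ≤ 2 * n := mul_pos (zero_lt_two' ℕ) n_pos
  let S := {p ∈ Finset.range (2 * n / 3 + 1) | Nat.Prime p}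
  let f x := x ^ n.centralBinom.factorization x
  have hle : ∀ p, f p ≤ 2 * n := fun p => Nat.pow_factorization_choose_le (mul_pos two_pos n_pos)
  have hsplit : ∏ p ∈ Finset.range (2 * n + 1), f p = (∏ x ∈ S, f x) * ∏ x ∈ dyPrimes n, f x := by
    have hdisj : Disjoint S (dyPrimes n) := by
      rw [Finset.disjoint_left]
      intro x hx hx'
      have h1 := Finset.mem_range.1 (Finset.mem_filter.1 hx).1
      have h2 := (Finset.mem_Ioc.1 (Finset.mem_filter.1 hx').1).1
      omega
    rw [← Finset.prod_union hdisj]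
    symm
    apply Finset.prod_subset
    · intro x hx
      rw [Finset.mem_range]
      rcases Finset.mem_union.1 hx with h | h
      · have h1 := Finset.mem_range.1 (Finset.mem_filter.1 h).1
        omega
      · have h2 := (Finset.mem_Ioc.1 (Finset.mem_filter.1 h).1).2
        omega
    · intro x hx hx'
      have hx := Finset.mem_range.1 hx
      by_cases hxp : x.Prime
      · simp only [S, dyPrimes, Finset.mem_union, Finset.mem_filter, Finset.mem_range,
          Finset.mem_Ioc, hxp, and_true, not_or] at hx'
        have : n.centralBinom.factorization x = 0 :=
          Nat.factorization_centralBinom_of_two_mul_self_lt_three_mul n_large (by omega) (by omega)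
        simp only [f, this, pow_zero]
      · simp only [f, Nat.factorization_eq_zero_of_not_prime n.centralBinom hxp, pow_zero]
  rw [← Nat.prod_pow_factorization_centralBinom, hsplit, ←
    Finset.prod_filter_mul_prod_filter_not S (· ≤ Nat.sqrt (2 * n))]
  apply mul_le_mul'
  · apply mul_le_mul'
    · refine (Finset.prod_le_prod' fun p _ => hle p).trans ?_
      have : (Finset.Icc 1 (Nat.sqrt (2 * n))).card = Nat.sqrt (2 * n) := by
        rw [Nat.card_Icc, Nat.add_sub_cancel]
      rw [Finset.prod_const]
      refine pow_right_mono₀ n2_pos ((Finset.card_le_card fun x hx => ?_).trans this.le)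
      obtain ⟨h1, h2⟩ := Finset.mem_filter.1 hx
      exact Finset.mem_Icc.mpr ⟨(Finset.mem_filter.1 h1).2.one_lt.le, h2⟩
    · refine le_trans ?_ (primorial_le_four_pow (2 * n / 3))
      refine (Finset.prod_le_prod' fun p hp => (?_ : f p ≤ p)).trans ?_
      · obtain ⟨h1, h2⟩ := Finset.mem_filter.1 hp
        refine (pow_right_mono₀ (Finset.mem_filter.1 h1).2.one_lt.le ?_).trans (pow_one p).le
        exact Nat.factorization_choose_le_one (Nat.sqrt_lt'.mp <| not_le.1 h2)
      refine Finset.prod_le_prod_of_subset_of_one_le' (Finset.filter_subset _ _) ?_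
      exact fun p hp _ => (Finset.mem_filter.1 hp).2.one_lt.le
  · exact Finset.prod_le_pow_card _ _ _ fun p _ => hle p

lemma dyPrimes_log (n : ℕ) (hn : 4 ≤ n) :
    (n : ℝ) / 3 ≤ ((dyPrimes n).card + √(2 * n) + 1) * Real.log (2 * n) := by
  have h1 := Nat.four_pow_lt_mul_centralBinom n hn
  have h2 := centralBinom_le_dyPrimes n (by omega)
  have h3 : 4 ^ n ≤ (2 * n) ^ (1 + Nat.sqrt (2 * n) + (dyPrimes n).card) * 4 ^ (2 * n / 3) := by
    calc 4 ^ n ≤ n * Nat.centralBinom n := h1.le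
      _ ≤ (2 * n) * ((2 * n) ^ (Nat.sqrt (2 * n)) * 4 ^ (2 * n / 3) *
      (2 * n) ^ (dyPrimes n).card) := by gcongr; omega
      _ = _ := by ring
  have h4 : (4 : ℝ) ^ n ≤ (2 * n) ^ (1 + Nat.sqrt (2 * n) + (dyPrimes n).card) * 4 ^ (2 * n / 3) := by
    exact_mod_cast h3
  have hn0 : (4 : ℝ) ≤ n := by exact_mod_cast hn
  have h5 := Real.log_le_log (by positivity) h4
  rw [Real.log_mul (by positivity) (by positivity), Real.log_pow, Real.log_pow, Real.log_pow] at h5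
  push_cast at h5
  have h6 : ((2 * n / 3 : ℕ) : ℝ) ≤ 2 * n / 3 := by
    have := @Nat.cast_div_le ℝ _ _ _ (2 * n) 3
    push_cast at this; exact this
  have h7 : (Nat.sqrt (2 * n) : ℝ) ≤ √(2 * n) := by
    have := Real.nat_sqrt_le_real_sqrt (a := 2 * n)
    push_cast at this; exact this
  have h8 : (1 : ℝ) ≤ Real.log 4 := by
    rw [show (4 : ℝ) = 2 ^ 2 by norm_num, Real.log_pow]
    have := Real.log_two_gt_d9
    push_cast; linarith
  have h9 : 0 ≤ Real.log (2 * n) := Real.log_nonneg (by linarith)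
  have h10 : ((2 * n / 3 : ℕ) : ℝ) * Real.log 4 ≤ 2 * n / 3 * Real.log 4 := by gcongr
  have h11 : (Nat.sqrt (2 * n) : ℝ) * Real.log (2 * n) ≤ √(2 * n) * Real.log (2 * n) := by gcongr
  nlinarith

open Filter in
lemma dyPrimes_card_ge (ε : ℝ) (hε : 0 < ε) (hε2 : ε ≤ 1 / 2) :
    ∀ᶠ n : ℕ in atTop, (n : ℝ) ^ (1 - ε) ≤ (dyPrimes n).card := by
  have ht : Tendsto (fun n : ℕ => (n : ℝ) ^ (ε / 2)) atTop atTop :=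
    (tendsto_rpow_atTop (by positivity)).comp tendsto_natCast_atTop_atTop
  filter_upwards [ht.eventually_gt_atTop (3 * (4 * ((2:ℝ) ^ (ε / 2) / (ε / 2)))),
    eventually_ge_atTop 4] with n h1 hn
  by_contra! hcon
  have hn0 : (4 : ℝ) ≤ n := by exact_mod_cast hn
  have h2 := dyPrimes_log n hn
  have h3 : Real.log (2 * n) ≤ (2 * n) ^ (ε / 2) / (ε / 2) :=
    Real.log_le_rpow_div (by positivity) (by positivity)
  have h4 : √(2 * n : ℝ) + 1 ≤ 3 * (n : ℝ) ^ (1 - ε) := by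
    have e1 : √(n : ℝ) ≤ (n : ℝ) ^ (1 - ε) := by
      rw [Real.sqrt_eq_rpow]
      exact Real.rpow_le_rpow_of_exponent_le (by linarith) (by linarith)
    have e2 : √(2 * n : ℝ) ≤ 2 * √n := by
      rw [Real.sqrt_le_left (by positivity), mul_pow, Real.sq_sqrt (by positivity)]
      linarith
    have e3 : (1 : ℝ) ≤ √n := by rw [Real.one_le_sqrt]; linarith
    linarith
  have h5 : (n : ℝ) / 3 ≤ (4 * (n : ℝ) ^ (1 - ε)) * ((2 * n) ^ (ε / 2) / (ε / 2)) := by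
    refine h2.trans ?_
    apply mul_le_mul _ h3 (Real.log_nonneg (by linarith)) (by positivity)
    linarith
  have h6 : (n : ℝ) = (n : ℝ) ^ (1 - ε) * (n : ℝ) ^ (ε / 2) * (n : ℝ) ^ (ε / 2) := by
    rw [← Real.rpow_add (by positivity), ← Real.rpow_add (by positivity)]
    ring_nf
    simp
  rw [Real.mul_rpow (by norm_num) (by positivity)] at h5
  set a := (n : ℝ) ^ (1 - ε)
  set b := (n : ℝ) ^ (ε / 2)
  have ha : 0 < a := by positivity
  have hb : 0 < b := by positivity
  rw [h6] at h5
  have h7 : a * b * b ≤ a * b * (3 * (4 * ((2:ℝ) ^ (ε / 2) / (ε / 2)))) := by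
    have : 4 * a * (2 ^ (ε / 2) * b / (ε / 2)) = a * b * (4 * ((2:ℝ) ^ (ε / 2) / (ε / 2))) := by ring
    linarith
  have := le_of_mul_le_mul_left h7 (by positivity)
  linarith

lemma qc_abs_le {p : ℕ} [Fact p.Prime] (a : ZMod p) : |quadraticChar (ZMod p) a| ≤ 1 := by
  by_cases h : a = 0
  · rw [h]; simp
  · rcases quadraticChar_dichotomy h with h | h <;> rw [h] <;> simp

lemma weil_tuple {p : ℕ} [Fact p.Prime] (hp2 : p ≠ 2) {ι : Type*} [Fintype ι]
    (w : ι → ZMod p) (hw : ∀ i, w i ≠ 0)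
    (hodd : ∃ i, Odd (Finset.univ.filter (fun j => w j = w i)).card) :
    |((∑ x : ZMod p, ∏ i, quadraticChar (ZMod p) (x + w i) : ℤ) : ℝ)| ≤
      (16 * Fintype.card ι + 8) * √p := by
  classical
  set χ := quadraticChar (ZMod p) with hχ
  set I := Finset.univ.image w with hI
  set O := I.filter (fun b => Odd (Finset.univ.filter (fun j => w j = b)).card) with hO
  have hOne : O.Nonempty := by
    obtain ⟨i, hi⟩ := hodd
    exact ⟨w i, Finset.mem_filter.2 ⟨Finset.mem_image_of_mem _ (Finset.mem_univ _), hi⟩⟩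
  have hO0 : (0 : ZMod p) ∉ O := by
    intro h
    obtain ⟨i, _, hi⟩ := Finset.mem_image.1 (Finset.mem_filter.1 h).1
    exact hw i hi
  have hIc : I.card ≤ Fintype.card ι := Finset.card_image_le
  have hOc : O.card ≤ Fintype.card ι := (Finset.card_filter_le _ _).trans hIc
  have hW := weil_linProd hp2 O hOne hO0
  have hpt : ∀ x : ZMod p, x ∉ I.image (fun b => -b) →
      ∏ i, χ (x + w i) = χ (∏ b ∈ O, (x + b)) := by
    intro x hx
    rw [map_prod, ← Finset.prod_fiberwise_of_maps_to (s := Finset.univ) (t := I) (g := w)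
      (fun i _ => Finset.mem_image_of_mem _ (Finset.mem_univ _)), hO, Finset.prod_filter]
    apply Finset.prod_congr rfl
    intro b hb
    have e : ∏ i ∈ Finset.univ.filter (fun i => w i = b), χ (x + w i) =
        ∏ i ∈ Finset.univ.filter (fun i => w i = b), χ (x + b) := by
      apply Finset.prod_congr rfl
      intro i hi
      rw [(Finset.mem_filter.1 hi).2]
    rw [e, Finset.prod_const]
    have hne : x + b ≠ 0 := by
      intro h
      exact hx (Finset.mem_image.2 ⟨b, hb, by linear_combination -h⟩)
    have hsq : χ (x + b) ^ 2 = 1 := quadraticChar_sq_one hne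
    split_ifs with h
    · obtain ⟨k, hk⟩ := h
      rw [hk, pow_succ, pow_mul, hsq, one_pow, one_mul]
    · obtain ⟨k, hk⟩ := Nat.not_odd_iff_even.1 h
      rw [hk, ← two_mul, pow_mul, hsq, one_pow]
  have hdiff : |(∑ x : ZMod p, ∏ i, χ (x + w i)) - ∑ x : ZMod p, χ (∏ b ∈ O, (x + b))|
      ≤ (Fintype.card ι : ℤ) := by
    rw [← Finset.sum_sub_distrib]
    refine (Finset.abs_sum_le_sum_abs _ _).trans ?_
    calc _ ≤ ∑ x : ZMod p, (if x ∈ I.image (fun b => -b) then (1 : ℤ) else 0) := by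
          apply Finset.sum_le_sum
          intro x _
          split_ifs with h
          · have : ∏ i, χ (x + w i) = 0 := by
              obtain ⟨b, hb, hbx⟩ := Finset.mem_image.1 h
              obtain ⟨i, _, hi⟩ := Finset.mem_image.1 hb
              apply Finset.prod_eq_zero (Finset.mem_univ i)
              rw [hi, ← hbx, neg_add_cancel]; exact MulChar.map_zero _
            rw [this, zero_sub, abs_neg]
            exact qc_abs_le _
          · rw [hpt x h]; simp
      _ = ((I.image (fun b => -b)).card : ℤ) := by
        simp only [Finset.sum_ite_mem, Finset.univ_inter, Finset.sum_const, nsmul_eq_mul, mul_one]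
      _ ≤ _ := by exact_mod_cast Finset.card_image_le.trans hIc
  have hdiff' : |((∑ x : ZMod p, ∏ i, χ (x + w i) : ℤ) : ℝ) -
      ((∑ x : ZMod p, χ (∏ b ∈ O, (x + b)) : ℤ) : ℝ)| ≤ (Fintype.card ι : ℝ) := by
    exact_mod_cast hdiff
  have hq1 : (1 : ℝ) ≤ √p := by
    rw [Real.one_le_sqrt]
    exact_mod_cast (Fact.out : p.Prime).one_lt.le
  have hOc' : (O.card : ℝ) ≤ Fintype.card ι := by exact_mod_cast hOc
  have h1 : (15 * (O.card : ℝ) + 8) * √p ≤ (15 * Fintype.card ι + 8) * √p := by gcongr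
  have h2 : (Fintype.card ι : ℝ) ≤ Fintype.card ι * √p := by
    have : (0 : ℝ) ≤ Fintype.card ι := by positivity
    nlinarith
  rw [abs_le] at hdiff' hW ⊢
  constructor <;> nlinarith [hdiff'.1, hdiff'.2, hW.1, hW.2]

lemma bad_count {ι : Type*} [Fintype ι] [DecidableEq ι] (r : ℕ) (hr : 1 ≤ r)
    (hι : Fintype.card ι = 2 * r)
    (B : ℕ) :
    ((Fintype.piFinset (fun _ : ι => Finset.Icc 1 B)).filter
      (fun v => ∀ i, Even (Finset.univ.filter (fun j => v j = v i)).card)).card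
      ≤ r ^ (2 * r) * B ^ r := by
  classical
  set T := (Fintype.piFinset (fun _ : Fin r => Finset.Icc 1 B)) ×ˢ
    (Finset.univ : Finset (ι → Fin r)) with hT
  have hTc : T.card = r ^ (2 * r) * B ^ r := by
    rw [hT, Finset.card_product, Fintype.card_piFinset]
    simp [hι, mul_comm]
  rw [← hTc]
  have : ((Fintype.piFinset (fun _ : ι => Finset.Icc 1 B)).filter
      (fun v => ∀ i, Even (Finset.univ.filter (fun j => v j = v i)).card)) ⊆
      T.image (fun q => fun i => q.1 (q.2 i)) := by
    intro v hv
    obtain ⟨hv1, hv2⟩ := Finset.mem_filter.1 hv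
    rw [Fintype.mem_piFinset] at hv1
    set I := Finset.univ.image v with hI
    have hIc : I.card ≤ r := by
      have h1 : (Finset.univ : Finset ι).card = ∑ b ∈ I, (Finset.univ.filter (fun j => v j = b)).card :=
        Finset.card_eq_sum_card_fiberwise (fun i _ => Finset.mem_image_of_mem _ (Finset.mem_univ _))
      have h2 : ∑ b ∈ I, 2 ≤ ∑ b ∈ I, (Finset.univ.filter (fun j => v j = b)).card := by
        apply Finset.sum_le_sum
        intro b hb
        obtain ⟨i, _, hi⟩ := Finset.mem_image.1 hb
        have h3 := hv2 i
        have h4 : 0 < (Finset.univ.filter (fun j => v j = v i)).card :=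
          Finset.card_pos.2 ⟨i, by simp⟩
        rw [hi] at h3 h4
        obtain ⟨k, hk⟩ := h3
        omega
      rw [← h1, Finset.card_univ, hι, Finset.sum_const, smul_eq_mul] at h2
      omega
    obtain ⟨emb⟩ : Nonempty (I ↪ Fin r) :=
      Function.Embedding.nonempty_of_card_le (by simpa using hIc)
    have hne : Nonempty ι := by
      rw [← Fintype.card_pos_iff, hι]; omega
    obtain ⟨i0⟩ := hne
    have hmem : ∀ i, v i ∈ I := fun i => Finset.mem_image_of_mem _ (Finset.mem_univ _)
    set u : Fin r → ℕ := Function.extend emb (fun b : I => (b : ℕ)) (fun _ => v i0) with hu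
    refine Finset.mem_image.2 ⟨(u, fun i => emb ⟨v i, hmem i⟩), ?_, ?_⟩
    · rw [hT, Finset.mem_product]
      refine ⟨?_, Finset.mem_univ _⟩
      rw [Fintype.mem_piFinset]
      intro k
      by_cases hk : ∃ b, emb b = k
      · obtain ⟨b, rfl⟩ := hk
        simp only [hu, emb.injective.extend_apply]
        obtain ⟨i, _, hi⟩ := Finset.mem_image.1 b.2
        rw [← hi]; exact hv1 i
      · simp only [hu]
        rw [Function.extend_apply' _ _ _ hk]
        exact hv1 i0
    · funext i
      simp only [hu, emb.injective.extend_apply]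
  exact (Finset.card_le_card this).trans Finset.card_image_le

lemma moment_bound {p : ℕ} [Fact p.Prime] (hp2 : p ≠ 2) (r : ℕ) (hr : 1 ≤ r) (B : ℕ) (hB : B < p)
    (c : ℕ → ℂ) (hc : ∀ b, ‖c b‖ ≤ 1) :
    ∑ x : ZMod p, ‖∑ b ∈ Finset.Icc 1 B, c b * ((quadraticChar (ZMod p) (x + b) : ℤ) : ℂ)‖ ^ (2 * r)
      ≤ r ^ (2 * r) * B ^ r * p + B ^ (2 * r) * ((32 * r + 8) * √p) := by
  classical
  set χ := quadraticChar (ZMod p) with hχ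
  let ι := Fin r ⊕ Fin r
  have hι : Fintype.card ι = 2 * r := by simp [ι]; ring
  let d : ι → ℕ → ℂ := fun i b => Sum.elim (fun _ => c b) (fun _ => (starRingEnd ℂ) (c b)) i
  have hd : ∀ i b, ‖d i b‖ ≤ 1 := by
    intro i b
    rcases i with i | i
    · exact hc b
    · simp only [d, Sum.elim_inr, RCLike.norm_conj]; exact hc b
  set PI := Fintype.piFinset (fun _ : ι => Finset.Icc 1 B) with hPI
  have hexp : ∀ x : ZMod p,
      ((‖∑ b ∈ Finset.Icc 1 B, c b * ((χ (x + b) : ℤ) : ℂ)‖ ^ (2 * r) : ℝ) : ℂ) =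
      ∑ v ∈ PI, (∏ i, d i (v i)) * ((∏ i, χ (x + v i) : ℤ) : ℂ) := by
    intro x
    have e1 : ∏ i : ι, ∑ b ∈ Finset.Icc 1 B, d i b * ((χ (x + b) : ℤ) : ℂ) =
        ∑ v ∈ PI, (∏ i, d i (v i)) * ((∏ i, χ (x + v i) : ℤ) : ℂ) := by
      rw [Finset.prod_univ_sum]
      apply Finset.sum_congr rfl
      intro v _
      rw [Finset.prod_mul_distrib]
      push_cast
      rfl
    rw [← e1, Fintype.prod_sum_type]
    simp only [d, Sum.elim_inl, Sum.elim_inr, Finset.prod_const, Finset.card_univ, Fintype.card_fin]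
    have e2 : ∑ b ∈ Finset.Icc 1 B, (starRingEnd ℂ) (c b) * ((χ (x + b) : ℤ) : ℂ) =
        (starRingEnd ℂ) (∑ b ∈ Finset.Icc 1 B, c b * ((χ (x + b) : ℤ) : ℂ)) := by
      rw [map_sum]
      apply Finset.sum_congr rfl
      intro b _
      rw [map_mul]
      simp
    rw [e2, ← mul_pow, Complex.mul_conj', pow_mul]
    push_cast
    rfl
  have hmain : ((∑ x : ZMod p, ‖∑ b ∈ Finset.Icc 1 B, c b * ((χ (x + b) : ℤ) : ℂ)‖ ^ (2 * r) : ℝ) : ℂ)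
      = ∑ v ∈ PI, (∏ i, d i (v i)) * ((∑ x : ZMod p, ∏ i, χ (x + v i) : ℤ) : ℂ) := by
    rw [Complex.ofReal_sum]
    simp_rw [hexp]
    rw [Finset.sum_comm]
    apply Finset.sum_congr rfl
    intro v _
    rw [← Finset.mul_sum]
    push_cast
    rfl
  have hle : ∑ x : ZMod p, ‖∑ b ∈ Finset.Icc 1 B, c b * ((χ (x + b) : ℤ) : ℂ)‖ ^ (2 * r)
      ≤ ∑ v ∈ PI, |((∑ x : ZMod p, ∏ i, χ (x + v i) : ℤ) : ℝ)| := by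
    have h0 : 0 ≤ ∑ x : ZMod p, ‖∑ b ∈ Finset.Icc 1 B, c b * ((χ (x + b) : ℤ) : ℂ)‖ ^ (2 * r) := by
      positivity
    rw [← abs_of_nonneg h0, ← Real.norm_eq_abs, ← Complex.norm_real, hmain]
    refine (norm_sum_le _ _).trans (Finset.sum_le_sum ?_)
    intro v _
    rw [norm_mul, norm_prod, Complex.norm_intCast]
    have : ∏ i, ‖d i (v i)‖ ≤ 1 := Finset.prod_le_one (fun _ _ => norm_nonneg _) (fun i _ => hd i _)
    have h2 := abs_nonneg ((∑ x : ZMod p, ∏ i, χ (x + v i) : ℤ) : ℝ)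
    nlinarith
  refine hle.trans ?_
  rw [← Finset.sum_filter_add_sum_filter_not PI
    (fun v => ∀ i, Even (Finset.univ.filter (fun j => v j = v i)).card)]
  have hcount := bad_count (ι := ι) r hr hι B
  apply add_le_add
  · calc _ ≤ ∑ v ∈ PI.filter (fun v => ∀ i, Even (Finset.univ.filter (fun j => v j = v i)).card),
          (p : ℝ) := by
          apply Finset.sum_le_sum
          intro v _
          push_cast
          refine (Finset.abs_sum_le_sum_abs _ _).trans ?_
          calc _ ≤ ∑ x : ZMod p, (1 : ℝ) := by
                apply Finset.sum_le_sum
                intro x _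
                rw [Finset.abs_prod]
                apply Finset.prod_le_one (fun _ _ => abs_nonneg _)
                intro i _
                have := qc_abs_le (x + ((v i : ℕ) : ZMod p))
                exact_mod_cast this
            _ = p := by simp [ZMod.card]
      _ = ((PI.filter (fun v => ∀ i, Even (Finset.univ.filter (fun j => v j = v i)).card)).card : ℝ)
          * p := by rw [Finset.sum_const, nsmul_eq_mul]
      _ ≤ _ := by
        gcongr
        exact_mod_cast hcount
  · calc _ ≤ ∑ v ∈ PI.filter (fun v => ¬ ∀ i, Even (Finset.univ.filter (fun j => v j = v i)).card),
          ((32 * r + 8) * √p) := by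
          apply Finset.sum_le_sum
          intro v hv
          obtain ⟨hv1, hv2⟩ := Finset.mem_filter.1 hv
          rw [hPI, Fintype.mem_piFinset] at hv1
          push Not at hv2
          obtain ⟨i, hi⟩ := hv2
          have hinj : ∀ j, ((v j : ℕ) : ZMod p) = ((v i : ℕ) : ZMod p) ↔ v j = v i := by
            intro j
            have h1 := Finset.mem_Icc.1 (hv1 j)
            have h2 := Finset.mem_Icc.1 (hv1 i)
            rw [ZMod.natCast_eq_natCast_iff', Nat.mod_eq_of_lt (by omega), Nat.mod_eq_of_lt (by omega)]
          have := weil_tuple hp2 (fun i : ι => ((v i : ℕ) : ZMod p)) (by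
            intro j h
            have h1 := Finset.mem_Icc.1 (hv1 j)
            rw [ZMod.natCast_eq_zero_iff] at h
            have := Nat.le_of_dvd (by omega) h
            omega) ⟨i, by
              simp only [hinj]
              simpa using hi⟩
          refine this.trans (le_of_eq ?_)
          rw [hι]; push_cast; ring
      _ = ((PI.filter (fun v => ¬ ∀ i, Even (Finset.univ.filter (fun j => v j = v i)).card)).card : ℝ)
          * ((32 * r + 8) * √p) := by rw [Finset.sum_const, nsmul_eq_mul]
      _ ≤ _ := by
        gcongr
        have : PI.card = B ^ (2 * r) := by
          rw [hPI, Fintype.card_piFinset]; simp [hι]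
        have h2 := Finset.card_filter_le PI
          (fun v => ¬ ∀ i, Even (Finset.univ.filter (fun j => v j = v i)).card)
        rw [this] at h2
        exact_mod_cast h2

lemma energy_bound {p : ℕ} [Fact p.Prime] (M X : ℕ) (hX : 1 ≤ X) (hMX : M * (2 * X) < p)
    (A : Finset ℕ) (hA : A ⊆ dyPrimes X) :
    (((Finset.Icc 1 M ×ˢ A) ×ˢ (Finset.Icc 1 M ×ˢ A)).filter
      (fun q => (q.1.1 : ZMod p) / (q.1.2 : ZMod p) = (q.2.1 : ZMod p) / (q.2.2 : ZMod p))).card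
      ≤ 2 * (M * A.card) := by
  classical
  have hmem : ∀ a ∈ A, X < a ∧ a ≤ 2 * X ∧ a.Prime := by
    intro a ha
    have := hA ha
    simp only [dyPrimes, Finset.mem_filter, Finset.mem_Ioc] at this
    exact ⟨this.1.1, this.1.2, this.2⟩
  have hAc : A.card ≤ X := by
    calc A.card ≤ (dyPrimes X).card := Finset.card_le_card hA
      _ ≤ (Finset.Ioc X (2 * X)).card := Finset.card_filter_le _ _
      _ = X := by rw [Nat.card_Ioc]; omega
  have hsub : (((Finset.Icc 1 M ×ˢ A) ×ˢ (Finset.Icc 1 M ×ˢ A)).filter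
      (fun q => (q.1.1 : ZMod p) / (q.1.2 : ZMod p) = (q.2.1 : ZMod p) / (q.2.2 : ZMod p))) ⊆
      (Finset.Icc 1 M ×ˢ A).image (fun j => (j, j)) ∪
      ((A ×ˢ A) ×ˢ Finset.Icc 1 (M / X)).image
        (fun t => ((t.1.1 * t.2, t.1.1), (t.1.2 * t.2, t.1.2))) := by
    rintro ⟨⟨n, a⟩, ⟨n', a'⟩⟩ hq
    simp only [Finset.mem_filter, Finset.mem_product, Finset.mem_Icc] at hq
    obtain ⟨⟨⟨⟨hn1, hnM⟩, ha⟩, ⟨hn1', hnM'⟩, ha'⟩, heq⟩ := hq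
    obtain ⟨h1, h2, h3⟩ := hmem a ha
    obtain ⟨h1', h2', h3'⟩ := hmem a' ha'
    have hXp : ∀ b, X < b → b ≤ 2 * X → ((b : ℕ) : ZMod p) ≠ 0 := by
      intro b hb1 hb2 h
      rw [ZMod.natCast_eq_zero_iff] at h
      have := Nat.le_of_dvd (by omega) h
      nlinarith
    rw [div_eq_div_iff (hXp a h1 h2) (hXp a' h1' h2')] at heq
    have hnat : n * a' = n' * a := by
      have : ((n * a' : ℕ) : ZMod p) = ((n' * a : ℕ) : ZMod p) := by push_cast; exact heq
      rw [ZMod.natCast_eq_natCast_iff'] at this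
      rwa [Nat.mod_eq_of_lt ((Nat.mul_le_mul hnM h2').trans_lt hMX),
        Nat.mod_eq_of_lt ((Nat.mul_le_mul hnM' h2).trans_lt hMX)] at this
    rw [Finset.mem_union]
    by_cases haa : a = a'
    · left
      subst haa
      have : n = n' := Nat.eq_of_mul_eq_mul_right (by omega) hnat
      subst this
      exact Finset.mem_image.2 ⟨(n, a), by simp [ha, hn1, hnM], rfl⟩
    · right
      have hdvd : a ∣ n := by
        have : a ∣ n * a' := ⟨n', by rw [hnat]; ring⟩
        rcases (Nat.Prime.dvd_mul h3).1 this with h | h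
        · exact h
        · exact absurd ((Nat.prime_dvd_prime_iff_eq h3 h3').1 h) haa
      obtain ⟨m, rfl⟩ := hdvd
      have hn' : n' = a' * m := by
        apply Nat.eq_of_mul_eq_mul_right (show 0 < a by omega)
        rw [← hnat]; ring
      subst hn'
      have hm1 : 1 ≤ m := by
        rcases Nat.eq_zero_or_pos m with h | h
        · subst h; omega
        · exact h
      have hm2 : m ≤ M / X := by
        rw [Nat.le_div_iff_mul_le (by omega)]
        nlinarith
      exact Finset.mem_image.2 ⟨((a, a'), m), by simp [ha, ha', hm1, hm2], rfl⟩
  refine (Finset.card_le_card hsub).trans ((Finset.card_union_le _ _).trans ?_)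
  have e1 := Finset.card_image_le (s := Finset.Icc 1 M ×ˢ A) (f := fun j => (j, j))
  have e2 := Finset.card_image_le (s := (A ×ˢ A) ×ˢ Finset.Icc 1 (M / X))
    (f := fun t => ((t.1.1 * t.2, t.1.1), (t.1.2 * t.2, t.1.2)))
  rw [Finset.card_product, Nat.card_Icc] at e1
  rw [Finset.card_product, Finset.card_product, Nat.card_Icc] at e2
  have e3 : A.card * A.card * (M / X) ≤ M * A.card := by
    calc A.card * A.card * (M / X) ≤ A.card * X * (M / X) := by gcongr
      _ = A.card * (X * (M / X)) := by ring
      _ ≤ A.card * M := by gcongr; exact Nat.mul_div_le M X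
      _ = _ := by ring
  simp only [Nat.add_sub_cancel] at e1 e2
  omega

lemma holder_count {α β : Type*} [Fintype β] [DecidableEq β] (J : Finset α) (φ : α → β)
    (f : β → ℝ) (hf : ∀ x, 0 ≤ f x) (r : ℕ) (hr : 1 ≤ r) :
    (∑ j ∈ J, f (φ j)) ^ (2 * r) ≤ (J.card : ℝ) ^ (2 * (r - 1)) *
      (((J ×ˢ J).filter (fun q => φ q.1 = φ q.2)).card * ∑ x, f x ^ (2 * r)) := by
  classical
  obtain ⟨k, rfl⟩ : ∃ k, r = k + 1 := ⟨r - 1, by omega⟩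
  have h1 : (∑ j ∈ J, f (φ j)) ^ (k + 1) ≤ (J.card : ℝ) ^ k * ∑ j ∈ J, f (φ j) ^ (k + 1) := by
    rcases J.eq_empty_or_nonempty with hJ | hJ
    · subst hJ; simp
    · have hJ0 : (0 : ℝ) < J.card := by exact_mod_cast hJ.card_pos
      have := pow_sum_div_card_le_sum_pow (s := J) (f := fun j => f (φ j)) (fun j _ => hf _) k
      rw [div_le_iff₀ (by positivity)] at this
      linarith
  have h2 : ∑ j ∈ J, f (φ j) ^ (k + 1) =
      ∑ x, ((J.filter (fun j => φ j = x)).card : ℝ) * f x ^ (k + 1) := by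
    rw [← Finset.sum_fiberwise_of_maps_to (s := J) (t := Finset.univ) (g := φ)
      (fun _ _ => Finset.mem_univ _)]
    apply Finset.sum_congr rfl
    intro x _
    rw [← nsmul_eq_mul, ← Finset.sum_const]
    apply Finset.sum_congr rfl
    intro j hj
    rw [(Finset.mem_filter.1 hj).2]
  have h3 : ∑ x, ((J.filter (fun j => φ j = x)).card : ℝ) ^ 2 =
      ((J ×ˢ J).filter (fun q => φ q.1 = φ q.2)).card := by
    have : ((J ×ˢ J).filter (fun q => φ q.1 = φ q.2)).card =
      ∑ x, (J.filter (fun j => φ j = x)).card ^ 2 := by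
      rw [Finset.card_eq_sum_card_fiberwise (f := fun q => φ q.1) (t := Finset.univ)
        (fun _ _ => Finset.mem_coe.2 (Finset.mem_univ _))]
      apply Finset.sum_congr rfl
      intro x _
      rw [sq, ← Finset.card_product]
      congr 1
      ext q
      simp only [Finset.mem_filter, Finset.mem_product]
      constructor
      · rintro ⟨⟨⟨a, b⟩, c⟩, d⟩
        exact ⟨⟨a, d⟩, b, by rw [← c, d]⟩
      · rintro ⟨⟨a, b⟩, c, d⟩
        exact ⟨⟨⟨a, c⟩, by rw [b, d]⟩, b⟩
    rw [this]; push_cast; rfl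
  have h4 := Finset.sum_mul_sq_le_sq_mul_sq Finset.univ
    (fun x => ((J.filter (fun j => φ j = x)).card : ℝ)) (fun x => f x ^ (k + 1))
  rw [h3] at h4
  have h0 : 0 ≤ ∑ j ∈ J, f (φ j) := Finset.sum_nonneg (fun _ _ => hf _)
  calc (∑ j ∈ J, f (φ j)) ^ (2 * (k + 1)) = ((∑ j ∈ J, f (φ j)) ^ (k + 1)) ^ 2 := by
        rw [← pow_mul]; ring_nf
    _ ≤ ((J.card : ℝ) ^ k * ∑ j ∈ J, f (φ j) ^ (k + 1)) ^ 2 := by gcongr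
    _ = (J.card : ℝ) ^ (2 * k) * (∑ j ∈ J, f (φ j) ^ (k + 1)) ^ 2 := by
        rw [mul_pow, ← pow_mul, mul_comm k 2]
    _ ≤ (J.card : ℝ) ^ (2 * k) * (((J ×ˢ J).filter (fun q => φ q.1 = φ q.2)).card *
          ∑ x, (f x ^ (k + 1)) ^ 2) := by
        gcongr
        rw [h2]; exact h4
    _ = _ := by
        simp only [Nat.add_sub_cancel]
        congr 2
        apply Finset.sum_congr rfl
        intro x _
        rw [← pow_mul, mul_comm]

lemma shift_bound (g : ℕ → ℂ) (hg : ∀ n, ‖g n‖ ≤ 1) (M h : ℕ) :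
    ‖(∑ n ∈ Finset.Icc 1 M, g n) - ∑ n ∈ Finset.Icc 1 M, g (n + h)‖ ≤ 2 * h := by
  induction h with
  | zero => simp
  | succ h ih =>
    have e : ∑ n ∈ Finset.Icc 1 M, g (n + h) - ∑ n ∈ Finset.Icc 1 M, g (n + (h + 1)) =
        g (1 + h) - g (M + 1 + h) := by
      clear ih
      induction M with
      | zero => simp
      | succ M ih =>
        rw [Finset.sum_Icc_succ_top (by omega), Finset.sum_Icc_succ_top (by omega)]
        have : g (M + 1 + (h + 1)) = g (M + 1 + 1 + h) := by congr 1; ring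
        rw [this]
        linear_combination ih
    calc _ = ‖((∑ n ∈ Finset.Icc 1 M, g n) - ∑ n ∈ Finset.Icc 1 M, g (n + h)) +
          (∑ n ∈ Finset.Icc 1 M, g (n + h) - ∑ n ∈ Finset.Icc 1 M, g (n + (h + 1)))‖ := by
          congr 1; ring
      _ ≤ 2 * h + (1 + 1) := by
          refine (norm_add_le _ _).trans (add_le_add ih ?_)
          rw [e]
          exact (norm_sub_le _ _).trans (add_le_add (hg _) (hg _))
      _ = _ := by push_cast; ring

lemma norm_pow_sub_le (z w : ℂ) (hz : ‖z‖ = 1) (hw : ‖w‖ = 1) (b : ℕ) :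
    ‖z ^ b - w ^ b‖ ≤ b * ‖z - w‖ := by
  induction b with
  | zero => simp
  | succ b ih =>
    have e : z ^ (b + 1) - w ^ (b + 1) = z ^ b * (z - w) + (z ^ b - w ^ b) * w := by ring
    rw [e]
    refine (norm_add_le _ _).trans ?_
    rw [norm_mul, norm_mul, norm_pow, hz, hw, one_pow]
    push_cast
    nlinarith

lemma circle_close (z w : ℂ) (hz : ‖z‖ = 1) (hw : ‖w‖ = 1) : ‖z - w‖ ≤ |z.arg - w.arg| := by
  have h1 : z = Complex.exp (z.arg * Complex.I) := by
    have := Complex.norm_mul_exp_arg_mul_I z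
    rw [hz] at this; simpa using this.symm
  have h2 : w = Complex.exp (w.arg * Complex.I) := by
    have := Complex.norm_mul_exp_arg_mul_I w
    rw [hw] at this; simpa using this.symm
  have e : z - w = w * (Complex.exp (Complex.I * ((z.arg - w.arg : ℝ) : ℂ)) - 1) := by
    conv_lhs => rw [h1, h2]
    conv_rhs => rw [h2]
    rw [mul_sub, ← Complex.exp_add, mul_one, ← h2]
    congr 2
    push_cast; ring
  rw [e, norm_mul, hw, one_mul]
  exact Real.norm_exp_I_mul_ofReal_sub_one_le

lemma pigeon_circle (P : Finset ℕ) (hP : P.Nonempty) (z : ℕ → ℂ) (hz : ∀ a, ‖z a‖ = 1)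
    (G : ℕ) (hG : 1 ≤ G) :
    ∃ A ⊆ P, A.Nonempty ∧ P.card ≤ (G + 1) * A.card ∧ ∃ w : ℂ, ‖w‖ = 1 ∧
      ∀ a ∈ A, ‖z a - w‖ ≤ 2 * Real.pi / G := by
  classical
  have hG0 : (0 : ℝ) < G := by exact_mod_cast hG
  have hpi := Real.pi_pos
  let t : ℕ → ℝ := fun a => ((z a).arg + Real.pi) * G / (2 * Real.pi)
  have ht0 : ∀ a, 0 ≤ t a := by
    intro a
    have := Complex.neg_pi_lt_arg (z a)
    apply div_nonneg (mul_nonneg (by linarith) hG0.le) (by positivity)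
  have htG : ∀ a, t a ≤ G := by
    intro a
    have := Complex.arg_le_pi (z a)
    rw [div_le_iff₀ (by positivity)]
    nlinarith
  have hmaps : ∀ a ∈ P, ⌊t a⌋₊ ∈ Finset.range (G + 1) := by
    intro a _
    rw [Finset.mem_range, Nat.lt_succ_iff]
    exact Nat.floor_le_of_le (htG a)
  obtain ⟨y, hy, hmax⟩ := Finset.exists_max_image (Finset.range (G + 1))
    (fun y => (P.filter (fun a => ⌊t a⌋₊ = y)).card) ⟨0, by simp⟩
  have hcard : P.card ≤ (G + 1) * (P.filter (fun a => ⌊t a⌋₊ = y)).card := by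
    calc P.card = ∑ y ∈ Finset.range (G + 1), (P.filter (fun a => ⌊t a⌋₊ = y)).card :=
          Finset.card_eq_sum_card_fiberwise hmaps
      _ ≤ ∑ _y ∈ Finset.range (G + 1), (P.filter (fun a => ⌊t a⌋₊ = y)).card :=
          Finset.sum_le_sum hmax
      _ = _ := by rw [Finset.sum_const, Finset.card_range, smul_eq_mul]
  have hne : (P.filter (fun a => ⌊t a⌋₊ = y)).Nonempty := by
    rw [← Finset.card_pos]
    rcases Nat.eq_zero_or_pos (P.filter (fun a => ⌊t a⌋₊ = y)).card with h | h
    · rw [h] at hcard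
      have := hP.card_pos
      omega
    · exact h
  obtain ⟨a0, ha0⟩ := hne
  refine ⟨_, Finset.filter_subset _ _, ⟨a0, ha0⟩, hcard, z a0, hz a0, ?_⟩
  intro a ha
  refine (circle_close _ _ (hz a) (hz a0)).trans ?_
  have e1 := (Finset.mem_filter.1 ha).2
  have e2 := (Finset.mem_filter.1 ha0).2
  have f1 := Nat.floor_le (ht0 a)
  have f2 := Nat.lt_floor_add_one (t a)
  have f3 := Nat.floor_le (ht0 a0)
  have f4 := Nat.lt_floor_add_one (t a0)
  rw [e1] at f1 f2
  rw [e2] at f3 f4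
  have harg : (z a).arg - (z a0).arg = (t a - t a0) * (2 * Real.pi / G) := by
    simp only [t]; field_simp; ring
  rw [harg, abs_mul, abs_of_pos (show 0 < 2 * Real.pi / G by positivity)]
  have : |t a - t a0| ≤ 1 := by rw [abs_le]; constructor <;> linarith
  have h0 : 0 < 2 * Real.pi / G := by positivity
  nlinarith

lemma qc_norm_le {p : ℕ} [Fact p.Prime] (a : ZMod p) :
    ‖((quadraticChar (ZMod p) a : ℤ) : ℂ)‖ ≤ 1 := by
  rw [Complex.norm_intCast]
  exact_mod_cast qc_abs_le a

lemma burgess_inner {p : ℕ} [Fact p.Prime] (z w : ℂ) (hz : ‖z‖ = 1) (hw : ‖w‖ = 1) (B : ℕ)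
    (δ : ℝ) (hδ : ‖z - w‖ ≤ δ) (n a : ℕ) (ha : (a : ZMod p) ≠ 0) :
    ‖∑ b ∈ Finset.Icc 1 B, z ^ b * ((quadraticChar (ZMod p) ((n + a * b : ℕ) : ZMod p) : ℤ) : ℂ)‖ ≤
    ‖∑ b ∈ Finset.Icc 1 B, w ^ b *
      ((quadraticChar (ZMod p) ((n : ZMod p) / (a : ZMod p) + b) : ℤ) : ℂ)‖ + B * (B * δ) := by
  set χ := quadraticChar (ZMod p) with hχ
  have h1 : ∀ b : ℕ, ((χ ((n + a * b : ℕ) : ZMod p) : ℤ) : ℂ) =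
      ((χ (a : ZMod p) : ℤ) : ℂ) * ((χ ((n : ZMod p) / (a : ZMod p) + b) : ℤ) : ℂ) := by
    intro b
    rw [← Int.cast_mul, ← map_mul]
    congr 2
    push_cast
    field_simp
  have h2 : ∑ b ∈ Finset.Icc 1 B, z ^ b * ((χ ((n + a * b : ℕ) : ZMod p) : ℤ) : ℂ) =
      ((χ (a : ZMod p) : ℤ) : ℂ) * (∑ b ∈ Finset.Icc 1 B, w ^ b *
      ((χ ((n : ZMod p) / (a : ZMod p) + b) : ℤ) : ℂ)) +
      ∑ b ∈ Finset.Icc 1 B, (z ^ b - w ^ b) * ((χ ((n + a * b : ℕ) : ZMod p) : ℤ) : ℂ) := by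
    rw [Finset.mul_sum, ← Finset.sum_add_distrib]
    apply Finset.sum_congr rfl
    intro b _
    rw [h1]; ring
  rw [h2]
  refine (norm_add_le _ _).trans (add_le_add ?_ ?_)
  · rw [norm_mul]
    exact mul_le_of_le_one_left (norm_nonneg _) (qc_norm_le _)
  · refine (norm_sum_le _ _).trans ?_
    calc _ ≤ ∑ b ∈ Finset.Icc 1 B, (B : ℝ) * δ := by
          apply Finset.sum_le_sum
          intro b hb
          have hb2 : (b : ℝ) ≤ B := by exact_mod_cast (Finset.mem_Icc.1 hb).2
          rw [norm_mul]
          have h3 := norm_pow_sub_le z w hz hw b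
          have h4 : (b : ℝ) * ‖z - w‖ ≤ B * δ := by gcongr
          calc _ ≤ ‖z ^ b - w ^ b‖ * 1 := by gcongr; exact qc_norm_le _
            _ ≤ _ := by linarith
      _ = _ := by rw [Finset.sum_const, Nat.card_Icc, nsmul_eq_mul]; simp

lemma burgess {p : ℕ} [Fact p.Prime] (hp2 : p ≠ 2) (ζ : ℂ) (hζ : ‖ζ‖ = 1)
    (M X B G r : ℕ) (hr : 1 ≤ r) (hM : 1 ≤ M) (hX : 1 ≤ X) (hB : 1 ≤ B) (hG : 1 ≤ G)
    (hMX : M * (2 * X) < p) (hBp : B < p) (hP : (dyPrimes X).Nonempty) (s : ℝ) (hs : 0 ≤ s)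
    (hsum : 2 * (G + 1) * ((r : ℝ) ^ (2 * r) * B ^ r * p + B ^ (2 * r) * ((32 * r + 8) * √p)) ≤
      s ^ (2 * r) * (B ^ (2 * r) * (M * (dyPrimes X).card))) :
    ‖∑ n ∈ Finset.Icc 1 M, ζ ^ n * ((quadraticChar (ZMod p) (n : ZMod p) : ℤ) : ℂ)‖ ≤
      4 * X * B + M * (2 * Real.pi * B / G + s) := by
  classical
  obtain ⟨A, hAP, hAne, hAc, w, hw, hclose⟩ := pigeon_circle (dyPrimes X) hP (fun a => ζ ^ a)
    (fun a => by simp [hζ]) G hG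
  set χ := quadraticChar (ZMod p) with hχ
  set J := Finset.Icc 1 M ×ˢ A with hJ
  have hmem : ∀ a ∈ A, X < a ∧ a ≤ 2 * X ∧ a.Prime := by
    intro a ha
    have := hAP ha
    simp only [dyPrimes, Finset.mem_filter, Finset.mem_Ioc] at this
    exact ⟨this.1.1, this.1.2, this.2⟩
  have hA0 : ∀ a ∈ A, (a : ZMod p) ≠ 0 := by
    intro a ha h
    obtain ⟨h1, h2, _⟩ := hmem a ha
    rw [ZMod.natCast_eq_zero_iff] at h
    have := Nat.le_of_dvd (by omega) h
    nlinarith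
  let T : ZMod p → ℝ := fun x => ‖∑ b ∈ Finset.Icc 1 B, w ^ b * ((χ (x + b) : ℤ) : ℂ)‖
  have hT0 : ∀ x, 0 ≤ T x := fun x => norm_nonneg _
  have hJc : J.card = M * A.card := by rw [hJ, Finset.card_product, Nat.card_Icc]; simp
  have hAc0 : (0 : ℝ) < A.card := by exact_mod_cast hAne.card_pos
  have hM0 : (0 : ℝ) < M := by exact_mod_cast hM
  have hB0 : (0 : ℝ) < B := by exact_mod_cast hB
  have hJ0 : (0 : ℝ) < J.card := by rw [hJc]; push_cast; positivity
  -- Holder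
  have hH := holder_count J (fun j => (j.1 : ZMod p) / (j.2 : ZMod p)) T hT0 r hr
  have hE := energy_bound (p := p) M X hX hMX A hAP
  have hmom := moment_bound hp2 r hr B hBp (fun b => w ^ b) (fun b => by simp [hw])
  set mom := (r : ℝ) ^ (2 * r) * B ^ r * p + B ^ (2 * r) * ((32 * r + 8) * √p) with hmomdef
  have hmom0 : 0 ≤ mom := by positivity
  have hTs : ∑ j ∈ J, T ((j.1 : ZMod p) / (j.2 : ZMod p)) ≤ J.card * B * s := by
    have hAc' : ((dyPrimes X).card : ℝ) ≤ (G + 1) * A.card := by exact_mod_cast hAc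
    apply le_of_pow_le_pow_left₀ (n := 2 * r) (by omega) (by positivity)
    refine hH.trans ?_
    have hE' : (((J ×ˢ J).filter (fun q => (q.1.1 : ZMod p) / (q.1.2 : ZMod p) =
        (q.2.1 : ZMod p) / (q.2.2 : ZMod p))).card : ℝ) ≤ 2 * J.card := by
      rw [hJc]; exact_mod_cast hE
    have key : 2 * mom ≤ s ^ (2 * r) * B ^ (2 * r) * J.card := by
      have hG1 : (0 : ℝ) < G + 1 := by positivity
      have : (G + 1) * (2 * mom) ≤ (G + 1) * (s ^ (2 * r) * B ^ (2 * r) * J.card) := by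
        calc (G + 1) * (2 * mom) = 2 * (G + 1) * mom := by ring
          _ ≤ s ^ (2 * r) * (B ^ (2 * r) * (M * (dyPrimes X).card)) := hsum
          _ ≤ s ^ (2 * r) * (B ^ (2 * r) * (M * ((G + 1) * A.card))) := by gcongr
          _ = _ := by rw [hJc]; push_cast; ring
      exact le_of_mul_le_mul_left this hG1
    calc _ ≤ (J.card : ℝ) ^ (2 * (r - 1)) * (2 * J.card * mom) := by
          gcongr
      _ = (J.card : ℝ) ^ (2 * (r - 1)) * J.card * (2 * mom) := by ring
      _ ≤ (J.card : ℝ) ^ (2 * (r - 1)) * J.card * (s ^ (2 * r) * B ^ (2 * r) * J.card) := by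
          gcongr
      _ = (J.card : ℝ) ^ (2 * (r - 1) + 2) * (s ^ (2 * r) * B ^ (2 * r)) := by ring
      _ = _ := by
          rw [show 2 * (r - 1) + 2 = 2 * r by omega]; ring
  -- shifting
  let g : ℕ → ℂ := fun n => ζ ^ n * ((χ (n : ZMod p) : ℤ) : ℂ)
  have hg : ∀ n, ‖g n‖ ≤ 1 := by
    intro n
    simp only [g, norm_mul, norm_pow, hζ, one_pow, one_mul]
    exact qc_norm_le _
  set F := ∑ n ∈ Finset.Icc 1 M, g n with hF
  have hsh : ∀ a ∈ A, ∀ b ∈ Finset.Icc 1 B,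
      ‖F - ∑ n ∈ Finset.Icc 1 M, g (n + a * b)‖ ≤ 4 * X * B := by
    intro a ha b hb
    refine (shift_bound g hg M (a * b)).trans ?_
    have h1 : a * b ≤ 2 * X * B := Nat.mul_le_mul (hmem a ha).2.1 (Finset.mem_Icc.1 hb).2
    have h2 : ((a * b : ℕ) : ℝ) ≤ 2 * X * B := by exact_mod_cast h1
    linarith
  have hinner : ∀ a ∈ A, ‖∑ b ∈ Finset.Icc 1 B, ∑ n ∈ Finset.Icc 1 M, g (n + a * b)‖ ≤
      ∑ n ∈ Finset.Icc 1 M, (T ((n : ZMod p) / (a : ZMod p)) + B * (B * (2 * Real.pi / G))) := by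
    intro a ha
    rw [Finset.sum_comm]
    refine (norm_sum_le _ _).trans (Finset.sum_le_sum ?_)
    intro n _
    have : ∑ b ∈ Finset.Icc 1 B, g (n + a * b) = ζ ^ n * ∑ b ∈ Finset.Icc 1 B,
        (ζ ^ a) ^ b * ((χ ((n + a * b : ℕ) : ZMod p) : ℤ) : ℂ) := by
      rw [Finset.mul_sum]
      apply Finset.sum_congr rfl
      intro b _
      simp only [g]
      rw [pow_add, pow_mul]; ring
    rw [this, norm_mul, norm_pow, hζ, one_pow, one_mul]
    exact burgess_inner (ζ ^ a) w (by simp [hζ]) hw B _ (hclose a ha) n a (hA0 a ha)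
  have htot : A.card * B * ‖F‖ ≤ A.card * B * (4 * X * B) +
      ∑ j ∈ J, (T ((j.1 : ZMod p) / (j.2 : ZMod p)) + B * (B * (2 * Real.pi / G))) := by
    have e1 : ((A.card * B : ℕ) : ℂ) * F = (∑ a ∈ A, ∑ b ∈ Finset.Icc 1 B,
        (F - ∑ n ∈ Finset.Icc 1 M, g (n + a * b))) +
        ∑ a ∈ A, ∑ b ∈ Finset.Icc 1 B, ∑ n ∈ Finset.Icc 1 M, g (n + a * b) := by
      simp only [Finset.sum_sub_distrib, sub_add_cancel, Finset.sum_const, nsmul_eq_mul,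
        Nat.card_Icc, Nat.add_sub_cancel]
      push_cast; ring
    have e2 : (A.card * B : ℝ) * ‖F‖ = ‖((A.card * B : ℕ) : ℂ) * F‖ := by
      rw [norm_mul, Complex.norm_natCast]; push_cast; ring
    rw [e2, e1]
    refine (norm_add_le _ _).trans (add_le_add ?_ ?_)
    · refine (norm_sum_le _ _).trans ?_
      calc _ ≤ ∑ a ∈ A, (B : ℝ) * (4 * X * B) := by
            apply Finset.sum_le_sum
            intro a ha
            refine (norm_sum_le _ _).trans ?_
            refine (Finset.sum_le_sum (hsh a ha)).trans (le_of_eq ?_)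
            rw [Finset.sum_const, Nat.card_Icc, nsmul_eq_mul, Nat.add_sub_cancel]
        _ = _ := by rw [Finset.sum_const, nsmul_eq_mul]; ring
    · refine (norm_sum_le _ _).trans ?_
      rw [hJ, Finset.sum_product_right]
      exact Finset.sum_le_sum hinner
  rw [Finset.sum_add_distrib, Finset.sum_const, nsmul_eq_mul] at htot
  have hAB : (0 : ℝ) < A.card * B := by positivity
  apply le_of_mul_le_mul_left _ hAB
  refine htot.trans ?_
  have e3 : (A.card * B : ℝ) * (4 * X * B + M * (2 * Real.pi * B / G + s)) =
      A.card * B * (4 * X * B) + (J.card * B * s + J.card * (B * (B * (2 * Real.pi / G)))) := by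
    rw [hJc]; push_cast; ring
  rw [e3]
  gcongr

lemma fourier_bound (f : ℕ → ℂ) (M : ℕ) (A : Finset ℕ) (hA : ∀ a ∈ A, ∀ b ∈ A, 1 ≤ a + b ∧ a + b ≤ M)
    (hf : ∀ a ∈ A, ∀ b ∈ A, f (a + b) = 1) (K : ℝ)
    (hK : ∀ ζ : ℂ, ‖ζ‖ = 1 → ‖∑ n ∈ Finset.Icc 1 M, ζ ^ n * f n‖ ≤ K) :
    (A.card : ℝ) ≤ K := by
  classical
  rcases A.eq_empty_or_nonempty with h0 | hne
  · subst h0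
    simpa using (norm_nonneg _).trans (hK 1 (by simp))
  set R := M + 1 with hR
  have : NeZero R := ⟨by omega⟩
  let ψ : AddChar (ZMod R) ℂ := ZMod.stdAddChar
  have hψ : ψ.IsPrimitive := ZMod.isPrimitive_stdAddChar R
  have horth : ∀ m n : ℕ, m ≤ M → n ≤ M →
      ∑ k : ZMod R, ψ (k * ((m : ZMod R) - (n : ZMod R))) = if m = n then (R : ℂ) else 0 := by
    intro m n hm hn
    rw [AddChar.sum_mulShift _ hψ, ZMod.card]
    have : ((m : ZMod R) - (n : ZMod R) = 0) ↔ m = n := by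
      rw [sub_eq_zero, ZMod.natCast_eq_natCast_iff', Nat.mod_eq_of_lt (by omega),
        Nat.mod_eq_of_lt (by omega)]
    by_cases h : m = n
    · simp [h]
    · rw [if_neg h, if_neg (fun h' => h (this.1 h'))]; simp
  have hR0 : (0 : ℝ) < R := by positivity
  let H : ZMod R → ℂ := fun k => ∑ a ∈ A, ψ (k * -(a : ZMod R))
  let F : ZMod R → ℂ := fun k => ∑ n ∈ Finset.Icc 1 M, ψ (k * n) * f n
  have hFK : ∀ k, ‖F k‖ ≤ K := by
    intro k
    have := hK (ψ k) (AddChar.norm_apply ψ k)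
    convert this using 4 with n _
    rw [← AddChar.map_nsmul_eq_pow, nsmul_eq_mul, mul_comm]
  have hA1 : ∀ a ∈ A, a ≤ M := fun a ha => by have := (hA a ha a ha).2; omega
  have hpars : ∑ k, ‖H k‖ ^ 2 = R * A.card := by
    have : ((∑ k, ‖H k‖ ^ 2 : ℝ) : ℂ) = ((R * A.card : ℝ) : ℂ) := by
      push_cast
      have e : ∀ k, ((‖H k‖ : ℂ)) ^ 2 = ∑ a ∈ A, ∑ b ∈ A, ψ (k * ((b : ZMod R) - (a : ZMod R))) := by
        intro k
        rw [← Complex.mul_conj']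
        simp only [H]
        rw [map_sum, Finset.sum_mul_sum]
        apply Finset.sum_congr rfl
        intro a _
        apply Finset.sum_congr rfl
        intro b _
        rw [← AddChar.map_neg_eq_conj, ← AddChar.map_add_eq_mul]
        congr 1; ring
      simp_rw [e]
      rw [Finset.sum_comm]
      calc _ = ∑ a ∈ A, (R : ℂ) := by
            apply Finset.sum_congr rfl
            intro a ha
            rw [Finset.sum_comm]
            rw [Finset.sum_congr rfl (fun b hb => horth b a (hA1 b hb) (hA1 a ha))]
            rw [Finset.sum_ite_eq' A a, if_pos ha]
        _ = _ := by rw [Finset.sum_const, nsmul_eq_mul]; ring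
    exact_mod_cast this
  have hmain : (R : ℂ) * (A.card : ℂ) ^ 2 = ∑ k, F k * (H k * H k) := by
    have e : ∀ k, F k * (H k * H k) = ∑ a ∈ A, ∑ b ∈ A, ∑ n ∈ Finset.Icc 1 M,
        f n * ψ (k * ((n : ZMod R) - ((a + b : ℕ) : ZMod R))) := by
      intro k
      simp only [H, F]
      rw [Finset.sum_mul_sum, Finset.mul_sum]
      apply Finset.sum_congr rfl
      intro a _
      rw [Finset.mul_sum]
      apply Finset.sum_congr rfl
      intro b _
      rw [Finset.sum_mul]
      apply Finset.sum_congr rfl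
      intro n _
      rw [show k * ((n : ZMod R) - ((a + b : ℕ) : ZMod R)) =
        k * n + (k * -(a : ZMod R) + k * -(b : ZMod R)) by push_cast; ring,
        AddChar.map_add_eq_mul, AddChar.map_add_eq_mul]
      ring
    simp_rw [e]
    rw [Finset.sum_comm]
    calc _ = ∑ a ∈ A, ∑ b ∈ A, (R : ℂ) := by
          simp only [Finset.sum_const, nsmul_eq_mul]; ring
      _ = _ := by
          apply Finset.sum_congr rfl
          intro a ha
          rw [Finset.sum_comm]
          apply Finset.sum_congr rfl
          intro b hb
          rw [Finset.sum_comm]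
          obtain ⟨h1, h2⟩ := hA a ha b hb
          rw [Finset.sum_congr rfl (fun n hn => by
            rw [← Finset.mul_sum, horth n (a + b) (Finset.mem_Icc.1 hn).2 h2])]
          simp only [mul_ite, mul_zero]
          rw [Finset.sum_ite_eq', if_pos (Finset.mem_Icc.2 ⟨h1, h2⟩), hf a ha b hb, one_mul]
  have hle : (R : ℝ) * (A.card : ℝ) ^ 2 ≤ K * (R * A.card) := by
    calc (R : ℝ) * (A.card : ℝ) ^ 2 = ‖(R : ℂ) * (A.card : ℂ) ^ 2‖ := by
          rw [norm_mul, norm_pow, Complex.norm_natCast, Complex.norm_natCast]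
      _ = ‖∑ k, F k * (H k * H k)‖ := by rw [hmain]
      _ ≤ ∑ k, K * ‖H k‖ ^ 2 := by
          refine (norm_sum_le _ _).trans (Finset.sum_le_sum ?_)
          intro k _
          rw [norm_mul, norm_mul, sq]
          gcongr
          exact hFK k
      _ = _ := by rw [← Finset.mul_sum, hpars]
  have hc0 : (0 : ℝ) < A.card := by exact_mod_cast hne.card_pos
  have : (R * A.card : ℝ) * A.card ≤ (R * A.card) * K := by nlinarith
  exact le_of_mul_le_mul_left this (by positivity)

lemma prod_card (P : Finset ℕ) (hP : ∀ q ∈ P, q.Prime) :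
    P.card * P.card ≤ 2 * ((P ×ˢ P).image (fun q => q.1 * q.2)).card := by
  classical
  rw [← Finset.card_product]
  refine Finset.card_le_mul_card_image (P ×ˢ P) 2 ?_
  intro m hm
  obtain ⟨⟨a, b⟩, hab, rfl⟩ := Finset.mem_image.1 hm
  obtain ⟨ha, hb⟩ := Finset.mem_product.1 hab
  have hsub : ((P ×ˢ P).filter (fun q => q.1 * q.2 = (a, b).1 * (a, b).2)) ⊆ {(a, b), (b, a)} := by
    rintro ⟨c, d⟩ hcd
    obtain ⟨h1, h2⟩ := Finset.mem_filter.1 hcd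
    obtain ⟨hc, hd⟩ := Finset.mem_product.1 h1
    simp only at h2 hc hd ha hb
    have hc' := hP c hc
    have hdv : c ∣ a * b := ⟨d, h2.symm⟩
    rcases (Nat.Prime.dvd_mul hc').1 hdv with h | h
    · have := (Nat.prime_dvd_prime_iff_eq hc' (hP a ha)).1 h
      subst this
      have := Nat.eq_of_mul_eq_mul_left hc'.pos h2
      simp [this]
    · have := (Nat.prime_dvd_prime_iff_eq hc' (hP b hb)).1 h
      subst this
      rw [mul_comm a c] at h2
      have := Nat.eq_of_mul_eq_mul_left hc'.pos h2
      simp [this]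
  exact (Finset.card_le_card hsub).trans Finset.card_le_two

lemma qc_eq_one_of_not {p : ℕ} [Fact p.Prime] (x : ℕ) (hx0 : 0 < x) (hxp : x < p)
    (h : ¬ IsQuadNonRes p (x : ℤ)) : quadraticChar (ZMod p) (x : ZMod p) = 1 := by
  have h1 : ¬ ((p : ℤ) ∣ (x : ℤ)) := by
    intro h
    have := Nat.le_of_dvd hx0 (Int.natCast_dvd_natCast.1 h)
    omega
  have h2 : ∃ y : ℤ, y ^ 2 ≡ x [ZMOD (p : ℤ)] := by
    by_contra h3
    exact h ⟨h1, h3⟩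
  obtain ⟨y, hy⟩ := h2
  have hx : (x : ZMod p) ≠ 0 := by
    rw [Ne, ZMod.natCast_eq_zero_iff]
    exact fun h => h1 (Int.natCast_dvd_natCast.2 h)
  rw [quadraticChar_one_iff_isSquare hx]
  refine ⟨(y : ZMod p), ?_⟩
  have := (ZMod.intCast_eq_intCast_iff _ _ p).2 hy
  push_cast at this
  rw [← this, sq]

lemma core_ineq {p : ℕ} [Fact p.Prime] (hp2 : p ≠ 2) (n X B r : ℕ) (hr : 1 ≤ r) (hn : 1 ≤ n)
    (hX : 1 ≤ X) (hB : 1 ≤ B) (hXB : X * B ^ 2 ≤ n ^ 2)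
    (hnp : 16 * n ^ 4 < p) (hBp : B < p) (hP : (dyPrimes X).Nonempty) (s : ℝ) (hs : 0 ≤ s)
    (hBr : √p ≤ (B : ℝ) ^ r)
    (hsum : 4 * (B : ℝ) ^ 2 * (((r : ℝ) ^ (2 * r) + (32 * r + 8)) * √p) ≤
      s ^ (2 * r) * (8 * n ^ 2 * (dyPrimes X).card))
    (hno : ∀ p₁ ∈ dyPrimes n, ∀ p₂ ∈ dyPrimes n, ∀ p₃ ∈ dyPrimes n, ∀ p₄ ∈ dyPrimes n,
      ¬ IsQuadNonRes p ((p₁ : ℤ) * p₂ + (p₃ : ℤ) * p₄)) :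
    ((dyPrimes n).card : ℝ) ^ 2 ≤ 2 * (n ^ 2 * ((4 + 16 * Real.pi) / B + 8 * s)) := by
  classical
  have hmem : ∀ a ∈ dyPrimes n, n < a ∧ a ≤ 2 * n ∧ a.Prime := by
    intro a ha
    simp only [dyPrimes, Finset.mem_filter, Finset.mem_Ioc] at ha
    exact ⟨ha.1.1, ha.1.2, ha.2⟩
  set A := (dyPrimes n ×ˢ dyPrimes n).image (fun q => q.1 * q.2) with hA
  have hcard := prod_card (dyPrimes n) (fun q hq => (hmem q hq).2.2)
  have hn4 : n ^ 2 ≤ n ^ 4 := Nat.pow_le_pow_right hn (by norm_num)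
  have hAb : ∀ a ∈ A, 1 ≤ a ∧ a ≤ 4 * n ^ 2 := by
    intro a ha
    obtain ⟨⟨c, d⟩, hcd, rfl⟩ := Finset.mem_image.1 ha
    obtain ⟨hc, hd⟩ := Finset.mem_product.1 hcd
    obtain ⟨c1, c2, c3⟩ := hmem c hc
    obtain ⟨d1, d2, d3⟩ := hmem d hd
    simp only
    refine ⟨Nat.mul_pos c3.pos d3.pos, ?_⟩
    nlinarith [Nat.mul_le_mul c2 d2]
  have hB0 : (0 : ℝ) < B := by exact_mod_cast hB
  have hXBr : (X : ℝ) * B ^ 2 ≤ n ^ 2 := by exact_mod_cast hXB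
  have hXn : X ≤ n ^ 2 := by
    refine le_trans ?_ hXB
    exact Nat.le_mul_of_pos_right X (by positivity)
  have hq0 : (0 : ℝ) ≤ √p := Real.sqrt_nonneg _
  have hpq : (p : ℝ) = √p * √p := (Real.mul_self_sqrt (by positivity)).symm
  have hB1 : (1 : ℝ) ≤ B := by exact_mod_cast hB
  have key := fourier_bound (fun n => ((quadraticChar (ZMod p) (n : ZMod p) : ℤ) : ℂ)) (8 * n ^ 2) A
    (fun a ha b hb => by have := hAb a ha; have := hAb b hb; omega)
    (fun a ha b hb => by
      have h1 := hAb a ha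
      have h2 := hAb b hb
      obtain ⟨⟨c, d⟩, hcd, rfl⟩ := Finset.mem_image.1 ha
      obtain ⟨hc, hd⟩ := Finset.mem_product.1 hcd
      obtain ⟨⟨c', d'⟩, hcd', rfl⟩ := Finset.mem_image.1 hb
      obtain ⟨hc', hd'⟩ := Finset.mem_product.1 hcd'
      have := hno c hc d hd c' hc' d' hd'
      have := qc_eq_one_of_not (p := p) (c * d + c' * d') (by simp only at h1; omega)
        (by simp only at h1 h2; omega) (by push_cast; exact this)
      simp only
      rw [this]; simp)
    (4 * X * B + ((8 * n ^ 2 : ℕ) : ℝ) * (2 * Real.pi * B / ((B ^ 2 : ℕ) : ℝ) + s))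
    (fun ζ hζ => burgess hp2 ζ hζ (8 * n ^ 2) X B (B ^ 2) r hr (by nlinarith) hX hB
      (Nat.one_le_pow _ _ hB)
      (by
        calc 8 * n ^ 2 * (2 * X) ≤ 8 * n ^ 2 * (2 * n ^ 2) := by gcongr
          _ = 16 * n ^ 4 := by ring
          _ < p := hnp) hBp hP s hs
      (by
        have h1 : (B : ℝ) ^ r * p ≤ B ^ (2 * r) * √p := by
          rw [two_mul, pow_add]
          calc (B : ℝ) ^ r * p = B ^ r * √p * √p := by rw [mul_assoc, ← hpq]
            _ ≤ B ^ r * B ^ r * √p := by gcongr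
        have h2 : ((B ^ 2 : ℕ) : ℝ) + 1 ≤ 2 * (B : ℝ) ^ 2 := by
          push_cast
          nlinarith
        calc 2 * (((B ^ 2 : ℕ) : ℝ) + 1) * ((r : ℝ) ^ (2 * r) * B ^ r * p +
              B ^ (2 * r) * ((32 * r + 8) * √p))
            ≤ 2 * (2 * (B : ℝ) ^ 2) * ((r : ℝ) ^ (2 * r) * (B ^ (2 * r) * √p) +
              B ^ (2 * r) * ((32 * r + 8) * √p)) := by
              rw [mul_assoc ((r : ℝ) ^ (2 * r))]
              gcongr
          _ = B ^ (2 * r) * (4 * (B : ℝ) ^ 2 * (((r : ℝ) ^ (2 * r) + (32 * r + 8)) * √p)) := by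
              ring
          _ ≤ B ^ (2 * r) * (s ^ (2 * r) * (8 * n ^ 2 * (dyPrimes X).card)) := by gcongr
          _ = _ := by push_cast; ring))
  have hc' : ((dyPrimes n).card : ℝ) ^ 2 ≤ 2 * A.card := by rw [sq]; exact_mod_cast hcard
  refine hc'.trans ?_
  have h3 : (4 * X * B : ℝ) ≤ n ^ 2 * (4 / B) := by
    rw [mul_div_assoc', le_div_iff₀ hB0]; nlinarith
  have h4 : 2 * Real.pi * B / ((B ^ 2 : ℕ) : ℝ) = 2 * Real.pi / B := by
    push_cast; field_simp
  rw [h4] at key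
  have h5 : ((8 * n ^ 2 : ℕ) : ℝ) * (2 * Real.pi / B + s) = n ^ 2 * (16 * Real.pi / B + 8 * s) := by
    push_cast; ring
  rw [h5] at key
  have h6 : (n : ℝ) ^ 2 * ((4 + 16 * Real.pi) / B + 8 * s) =
      n ^ 2 * (4 / B) + n ^ 2 * (16 * Real.pi / B + 8 * s) := by ring
  rw [h6]
  linarith

lemma half_floor (x : ℝ) (hx : 1 ≤ x) : x / 2 ≤ ⌊x⌋₊ := by
  have h1 := Nat.lt_floor_add_one x
  have h2 : (1 : ℝ) ≤ ⌊x⌋₊ := by exact_mod_cast (Nat.one_le_floor_iff x).2 hx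
  linarith

lemma ev_rpow (e : ℝ) (he : 0 < e) (C : ℝ) :
    ∀ᶠ p : ℕ in Filter.atTop, C ≤ (p : ℝ) ^ e :=
  ((tendsto_rpow_atTop he).comp tendsto_natCast_atTop_atTop).eventually_ge_atTop C

set_option maxHeartbeats 2000000 in
theorem primes_products_sum_nonresidue (η : ℝ) (hη : 0 < η) (hη' : η < 1 / 20) :
    ∃ p₀ : ℕ, ∀ (p : ℕ), p.Prime → p₀ ≤ p →
      ∃ p₁ p₂ p₃ p₄ : ℕ, p₁.Prime ∧ p₂.Prime ∧ p₃.Prime ∧ p₄.Prime ∧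
        (p : ℝ) ^ ((1 : ℝ) / 8 + η) < (p₁ : ℝ) ∧ (p₁ : ℝ) ≤ 2 * (p : ℝ) ^ ((1 : ℝ) / 8 + η) ∧
        (p : ℝ) ^ ((1 : ℝ) / 8 + η) < (p₂ : ℝ) ∧ (p₂ : ℝ) ≤ 2 * (p : ℝ) ^ ((1 : ℝ) / 8 + η) ∧
        (p : ℝ) ^ ((1 : ℝ) / 8 + η) < (p₃ : ℝ) ∧ (p₃ : ℝ) ≤ 2 * (p : ℝ) ^ ((1 : ℝ) / 8 + η) ∧
        (p : ℝ) ^ ((1 : ℝ) / 8 + η) < (p₄ : ℝ) ∧ (p₄ : ℝ) ≤ 2 * (p : ℝ) ^ ((1 : ℝ) / 8 + η) ∧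
        IsQuadNonRes p ((p₁ : ℤ) * p₂ + (p₃ : ℤ) * p₄) := by
  classical
  set θ : ℝ := 1 / 8 + η with hθ
  set κ : ℝ := η / 4 with hκ
  obtain ⟨r, hr⟩ := exists_nat_ge (4 / η)
  have hrη : 4 ≤ r * η := by rwa [div_le_iff₀ hη] at hr
  have hr1 : 1 ≤ r := by
    rcases Nat.eq_zero_or_pos r with h | h
    · subst h; norm_num at hrη
    · exact h
  have hrR : (1 : ℝ) ≤ r := by exact_mod_cast hr1
  set ε : ℝ := η / (8 * r) with hε
  have hε0 : 0 < ε := by positivity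
  have hεη : ε ≤ η / 8 := by
    rw [hε]
    exact div_le_div_of_nonneg_left hη.le (by norm_num) (by linarith)
  have hκ0 : 0 < κ := by positivity
  have hθ0 : 0 < θ := by positivity
  set C : ℝ := (r : ℝ) ^ (2 * r) + (32 * r + 8) with hC
  -- the eventual facts
  obtain ⟨n₀, hn₀⟩ := Filter.eventually_atTop.1 (dyPrimes_card_ge ε hε0 (by linarith))
  have E1 := ev_rpow θ hθ0 (max 1 (2 * n₀))
  have E2 := ev_rpow κ hκ0 1
  have E3 := ev_rpow (2 * θ - 2 * κ) (by linarith) (max 4 (8 * max 1 (n₀ : ℝ)))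
  have E4 := ev_rpow (1 / 5) (by norm_num) 17
  have E5 := ev_rpow (1 / 2) (by norm_num) (2 ^ r)
  have E6 := ev_rpow η hη (16 * C)
  have E7 := ev_rpow ε hε0 289
  have E8 := Filter.eventually_ge_atTop (α := ℕ) 3
  obtain ⟨p₀, hp₀⟩ := Filter.eventually_atTop.1
    (E1.and (E2.and (E3.and (E4.and (E5.and (E6.and (E7.and E8)))))))
  refine ⟨p₀, ?_⟩
  intro p hp hpp
  obtain ⟨e1, e2, e3, e4, e5, e6, e7, e8⟩ := hp₀ p hpp
  have : Fact p.Prime := ⟨hp⟩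
  set q : ℝ := (p : ℝ) with hq
  have hq3 : (3 : ℝ) ≤ q := by rw [hq]; exact_mod_cast e8
  have hq0 : 0 < q := by linarith
  have hq1 : 1 ≤ q := by linarith
  set n := ⌊q ^ θ⌋₊ with hn
  set B := ⌊q ^ κ⌋₊ with hB
  have hn1 := half_floor _ ((le_max_left _ _).trans e1)
  have hn2 : (n : ℝ) ≤ q ^ θ := Nat.floor_le (by positivity)
  have hB1 := half_floor _ e2
  have hB2 : (B : ℝ) ≤ q ^ κ := Nat.floor_le (by positivity)
  rw [← hn] at hn1
  rw [← hB] at hB1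
  have hB0 : 1 ≤ B := by rw [hB, Nat.one_le_floor_iff]; exact e2
  have hn0 : 1 ≤ n := by rw [hn, Nat.one_le_floor_iff]; exact (le_max_left _ _).trans e1
  have hBR : (1 : ℝ) ≤ B := by exact_mod_cast hB0
  have hnR : (1 : ℝ) ≤ n := by exact_mod_cast hn0
  set X := ⌊(n : ℝ) ^ 2 / (B : ℝ) ^ 2⌋₊ with hX
  have hXlow : q ^ (2 * θ - 2 * κ) / 4 ≤ (n : ℝ) ^ 2 / (B : ℝ) ^ 2 := by
    rw [le_div_iff₀ (by positivity)]
    have h1 : (B : ℝ) ^ 2 ≤ q ^ (2 * κ) := by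
      rw [two_mul, Real.rpow_add hq0, sq]; gcongr
    have h2 : q ^ (2 * θ) / 4 ≤ (n : ℝ) ^ 2 := by
      rw [two_mul, Real.rpow_add hq0]
      have : (q ^ θ / 2) ^ 2 ≤ (n : ℝ) ^ 2 := by gcongr
      linarith [this]
    calc q ^ (2 * θ - 2 * κ) / 4 * (B : ℝ) ^ 2 ≤ q ^ (2 * θ - 2 * κ) / 4 * q ^ (2 * κ) := by gcongr
      _ = q ^ (2 * θ) / 4 := by
        rw [div_mul_eq_mul_div, ← Real.rpow_add hq0]; congr 2; ring
      _ ≤ _ := h2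
  have e3a : 4 ≤ q ^ (2 * θ - 2 * κ) := (le_max_left _ _).trans e3
  have e3b : 8 * max 1 (n₀ : ℝ) ≤ q ^ (2 * θ - 2 * κ) := (le_max_right _ _).trans e3
  have hXh := half_floor ((n : ℝ) ^ 2 / (B : ℝ) ^ 2) (by linarith)
  rw [← hX] at hXh
  have hXl : q ^ (2 * θ - 2 * κ) / 8 ≤ X := by linarith
  have hX1R : (1 : ℝ) ≤ X := by linarith [le_max_left 1 (n₀ : ℝ)]
  have hX1 : 1 ≤ X := by exact_mod_cast hX1R
  have hXn₀ : n₀ ≤ X := by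
    have : (n₀ : ℝ) ≤ X := by linarith [le_max_right 1 (n₀ : ℝ)]
    exact_mod_cast this
  have hXB : X * B ^ 2 ≤ n ^ 2 := by
    have h1 : (X : ℝ) ≤ (n : ℝ) ^ 2 / (B : ℝ) ^ 2 := Nat.floor_le (by positivity)
    rw [le_div_iff₀ (by positivity)] at h1
    exact_mod_cast h1
  have hnn₀ : n₀ ≤ n := by
    have : (n₀ : ℝ) ≤ n := by linarith [(le_max_right 1 (2 * (n₀ : ℝ))).trans e1]
    exact_mod_cast this
  have hPX := hn₀ X hXn₀
  have hPn := hn₀ n hnn₀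
  have hPXne : (dyPrimes X).Nonempty := by
    rw [← Finset.card_pos]
    have h1 : (0 : ℝ) < (X : ℝ) ^ (1 - ε) := by positivity
    have : (0 : ℝ) < (dyPrimes X).card := h1.trans_le hPX
    exact_mod_cast this
  by_contra hcon
  have hno : ∀ p₁ ∈ dyPrimes n, ∀ p₂ ∈ dyPrimes n, ∀ p₃ ∈ dyPrimes n, ∀ p₄ ∈ dyPrimes n,
      ¬ IsQuadNonRes p ((p₁ : ℤ) * p₂ + (p₃ : ℤ) * p₄) := by
    have hm : ∀ a ∈ dyPrimes n, a.Prime ∧ q ^ θ < a ∧ a ≤ 2 * q ^ θ := by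
      intro a ha
      simp only [dyPrimes, Finset.mem_filter, Finset.mem_Ioc] at ha
      refine ⟨ha.2, ?_, ?_⟩
      · exact (Nat.floor_lt (by positivity)).1 ha.1.1
      · have : (a : ℝ) ≤ 2 * n := by exact_mod_cast ha.1.2
        linarith
    intro p₁ h1 p₂ h2 p₃ h3 p₄ h4 hN
    obtain ⟨a1, b1, c1⟩ := hm p₁ h1
    obtain ⟨a2, b2, c2⟩ := hm p₂ h2
    obtain ⟨a3, b3, c3⟩ := hm p₃ h3
    obtain ⟨a4, b4, c4⟩ := hm p₄ h4
    exact hcon ⟨p₁, p₂, p₃, p₄, a1, a2, a3, a4, b1, c1, b2, c2, b3, c3, b4, c4, hN⟩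
  set s : ℝ := q ^ (-(4 * ε)) with hs
  have hs2 : s ^ (2 * r) = q ^ (-η) := by
    rw [hs, ← Real.rpow_mul_natCast hq0.le]
    congr 1
    rw [hε]; push_cast; field_simp; ring
  have hn4 : (n : ℝ) ^ 4 ≤ q ^ ((4 : ℝ) / 5) := by
    calc (n : ℝ) ^ 4 ≤ (q ^ θ) ^ 4 := by gcongr
      _ = q ^ (θ * (4 : ℕ)) := by rw [Real.rpow_mul_natCast hq0.le]
      _ ≤ _ := Real.rpow_le_rpow_of_exponent_le hq1 (by push_cast; linarith)
  have hnp : 16 * n ^ 4 < p := by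
    have h1 : q ^ ((1 : ℝ) / 5) * q ^ ((4 : ℝ) / 5) = q := by
      rw [← Real.rpow_add hq0]; norm_num
    have h2 : 0 < q ^ ((4 : ℝ) / 5) := by positivity
    have : (16 : ℝ) * n ^ 4 < q := by nlinarith
    rw [hq] at this
    exact_mod_cast this
  have hBp : B < p := by
    have h1 : q ^ κ < q ^ (1 : ℝ) := Real.rpow_lt_rpow_of_exponent_lt (by linarith) (by linarith)
    rw [Real.rpow_one] at h1
    have h2 := hB2.trans_lt h1
    rw [hq] at h2
    exact_mod_cast h2
  have hsq : √q = q ^ ((1 : ℝ) / 2) := Real.sqrt_eq_rpow q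
  have hBr : √q ≤ (B : ℝ) ^ r := by
    have h1 : (q ^ κ / 2) ^ r ≤ (B : ℝ) ^ r := by gcongr
    refine le_trans ?_ h1
    rw [div_pow, le_div_iff₀ (by positivity), ← Real.rpow_mul_natCast hq0.le, hsq]
    calc q ^ ((1 : ℝ) / 2) * 2 ^ r ≤ q ^ ((1 : ℝ) / 2) * q ^ ((1 : ℝ) / 2) := by gcongr
      _ = q ^ (1 : ℝ) := by rw [← Real.rpow_add hq0]; norm_num
      _ ≤ _ := Real.rpow_le_rpow_of_exponent_le hq1 (by rw [hκ]; linarith)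
  have hPXl : q ^ (2 * θ - 2 * κ - ε) / 8 ≤ (dyPrimes X).card := by
    refine le_trans ?_ hPX
    have h8 : (8 : ℝ) ^ (1 - ε) ≤ 8 := by
      calc (8 : ℝ) ^ (1 - ε) ≤ 8 ^ (1 : ℝ) :=
            Real.rpow_le_rpow_of_exponent_le (by norm_num) (by linarith)
        _ = 8 := Real.rpow_one 8
    calc q ^ (2 * θ - 2 * κ - ε) / 8 ≤ q ^ ((2 * θ - 2 * κ) * (1 - ε)) / 8 := by
          apply div_le_div_of_nonneg_right _ (by norm_num)
          apply Real.rpow_le_rpow_of_exponent_le hq1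
          have : (2 * θ - 2 * κ) * ε ≤ 1 * ε := by
            apply mul_le_mul_of_nonneg_right _ hε0.le
            linarith
          linarith
      _ ≤ q ^ ((2 * θ - 2 * κ) * (1 - ε)) / 8 ^ (1 - ε) := by gcongr
      _ = (q ^ (2 * θ - 2 * κ) / 8) ^ (1 - ε) := by
          rw [Real.div_rpow (by positivity) (by norm_num), Real.rpow_mul hq0.le]
      _ ≤ _ := Real.rpow_le_rpow (by positivity) hXl (by linarith)
  have hn2l : q ^ (2 * θ) / 4 ≤ (n : ℝ) ^ 2 := by
    rw [two_mul, Real.rpow_add hq0]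
    have : (q ^ θ / 2) ^ 2 ≤ (n : ℝ) ^ 2 := by gcongr
    linarith [this]
  have hsum : 4 * (B : ℝ) ^ 2 * (((r : ℝ) ^ (2 * r) + (32 * r + 8)) * √q) ≤
      s ^ (2 * r) * (8 * n ^ 2 * (dyPrimes X).card) := by
    rw [← hC, hs2, hsq]
    have hB2' : (B : ℝ) ^ 2 ≤ q ^ (2 * κ) := by
      rw [two_mul, Real.rpow_add hq0, sq]; gcongr
    have hC0 : 0 ≤ C := by positivity
    calc 4 * (B : ℝ) ^ 2 * (C * q ^ ((1 : ℝ) / 2))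
        ≤ 4 * q ^ (2 * κ) * (q ^ η / 16 * q ^ ((1 : ℝ) / 2)) := by
          gcongr; linarith
      _ = q ^ (2 * κ + η + 1 / 2) / 4 := by
          rw [Real.rpow_add hq0, Real.rpow_add hq0]; ring
      _ ≤ q ^ (-η + 2 * θ + (2 * θ - 2 * κ - ε)) / 4 := by
          apply div_le_div_of_nonneg_right _ (by norm_num)
          apply Real.rpow_le_rpow_of_exponent_le hq1
          rw [hθ, hκ]; linarith
      _ = q ^ (-η) * (8 * (q ^ (2 * θ) / 4) * (q ^ (2 * θ - 2 * κ - ε) / 8)) := by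
          rw [Real.rpow_add hq0, Real.rpow_add hq0]; ring
      _ ≤ _ := by gcongr
  have hfin := core_ineq (p := p) (by omega) n X B r hr1 hn0 hX1 hB0 hXB hnp hBp hPXne s
    (by positivity) hBr hsum hno
  -- contradiction
  have h1 : ((n : ℝ) ^ (1 - ε)) ^ 2 ≤ ((dyPrimes n).card : ℝ) ^ 2 := by gcongr
  have hnε : ((n : ℝ) ^ (1 - ε)) * (n : ℝ) ^ ε = n := by
    rw [← Real.rpow_add (by linarith)]; simp
  have hnε2 : ((n : ℝ) ^ ε) ^ 2 ≤ q ^ ε := by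
    rw [← Real.rpow_mul_natCast (by positivity)]
    calc (n : ℝ) ^ (ε * (2 : ℕ)) ≤ (q ^ θ) ^ (ε * (2 : ℕ)) :=
          Real.rpow_le_rpow (by positivity) hn2 (by positivity)
      _ = q ^ (θ * (ε * (2 : ℕ))) := by rw [Real.rpow_mul hq0.le]
      _ ≤ _ := by
        apply Real.rpow_le_rpow_of_exponent_le hq1
        push_cast
        nlinarith
  have hW : (4 + 16 * Real.pi) / B + 8 * s ≤ 144 * q ^ (-(2 * ε)) := by
    have hs' : s ≤ q ^ (-(2 * ε)) := Real.rpow_le_rpow_of_exponent_le hq1 (by linarith)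
    have hBi : (4 + 16 * Real.pi) / B ≤ 136 * q ^ (-(2 * ε)) := by
      rw [div_le_iff₀ (by linarith)]
      have h2 : 1 ≤ q ^ (-(2 * ε)) * q ^ κ := by
        rw [← Real.rpow_add hq0]
        exact Real.one_le_rpow hq1 (by linarith)
      have h3 : q ^ (-(2 * ε)) * (q ^ κ / 2) ≤ q ^ (-(2 * ε)) * B := by gcongr
      have := Real.pi_le_four
      nlinarith
    linarith
  have h2 : (n : ℝ) ^ 2 ≤ q ^ ε * (2 * (n ^ 2 * (144 * q ^ (-(2 * ε))))) := by
    calc (n : ℝ) ^ 2 = ((n : ℝ) ^ ε) ^ 2 * ((n : ℝ) ^ (1 - ε)) ^ 2 := by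
          rw [← mul_pow, mul_comm, hnε]
      _ ≤ q ^ ε * (2 * (n ^ 2 * ((4 + 16 * Real.pi) / B + 8 * s))) := by
          gcongr
          exact h1.trans hfin
      _ ≤ _ := by gcongr
  have h3 : q ^ ε * q ^ (-(2 * ε)) * q ^ ε = 1 := by
    rw [← Real.rpow_add hq0, ← Real.rpow_add hq0]
    rw [show ε + -(2 * ε) + ε = 0 by ring, Real.rpow_zero]
  have h4 : (1 : ℝ) ≤ 288 * (q ^ ε * q ^ (-(2 * ε))) := by
    have hn2p : (0 : ℝ) < (n : ℝ) ^ 2 := by positivity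
    apply le_of_mul_le_mul_left _ hn2p
    linarith
  have h5 : 0 < q ^ ε * q ^ (-(2 * ε)) := by positivity
  nlinarith
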